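/- arXiv:1312.4716 — 6 statements merged into one kernel-verified Lean document; each statement's English description precedes it below -/
import Mathlib

section
/- Let k be a positive integer, n = 4k, and d = (5^{4k} - 1)/(5^k - 1) + 1. Let a ∈ F_{5^n}, a ≠ 0, and let λ_1, λ_2, λ_3, λ_4 ∈ F_{5^k} be the elementary symmetric functions of a, a^{5^k}, a^{5^{2k}}, a^{5^{3k}}. Then a^{-1}x^d is a complete permutation polynomial over F_{5^n} if and only if one of the following holds: (1) λ_1 = λ_2 = λ_3 = 0 and -λ_4 is not a fourth power in F_{5^k}; (2) λ_1 = 0, λ_2 ≠ 0, -λ_2² = λ_4 + 3λ_3²λ_2^{-1}, and 2λ_2 is not a square in F_{5^k}; (3) k = 1, λ_1 = 0, λ_2 = 2 or λ_2 = -2, and λ_4 + 3λ_3²λ_2^{-1} = 4. -/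
open Polynomial

namespace CPP5

lemma coeff_pow5 {K : Type*} [Field K] [CharP K 5] (H : K[X]) (n : ℕ) :
    (H ^ 5).coeff n = if 5 ∣ n then (H.coeff (n / 5)) ^ 5 else 0 := by
  have : Fact (Nat.Prime 5) := ⟨by norm_num⟩
  rw [← map_frobenius_expand 5, coeff_map, coeff_expand (by norm_num)]
  split_ifs <;> simp [frobenius_def]

lemma coeff_zero_of {K : Type*} [Field K] [CharP K 5] (g H : K[X]) (n : ℕ)
    (h : ∀ j m, j + 5 * m = n → g.coeff j = 0 ∨ H.coeff m = 0) :
    (g * H ^ 5).coeff n = 0 := by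
  rw [coeff_mul]
  apply Finset.sum_eq_zero
  rintro ⟨j, i⟩ hji
  rw [Finset.HasAntidiagonal.mem_antidiagonal] at hji
  simp only at hji ⊢
  rw [coeff_pow5]
  split_ifs with h5
  · obtain ⟨m, rfl⟩ := h5
    rcases h j m hji with h | h <;> simp [h]
  · simp

lemma coeff_single {K : Type*} [Field K] [CharP K 5] (g H : K[X]) (n j0 m0 : ℕ)
    (hn : j0 + 5 * m0 = n)
    (h : ∀ j m, j + 5 * m = n → j ≠ j0 → g.coeff j = 0 ∨ H.coeff m = 0) :
    (g * H ^ 5).coeff n = g.coeff j0 * (H.coeff m0) ^ 5 := by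
  rw [coeff_mul, Finset.sum_eq_single (j0, 5 * m0)]
  · simp [coeff_pow5]
  · rintro ⟨j, i⟩ hji hne
    rw [Finset.HasAntidiagonal.mem_antidiagonal] at hji
    simp only at hji ⊢
    rw [coeff_pow5]
    split_ifs with h5
    · obtain ⟨m, rfl⟩ := h5
      have : j ≠ j0 := by
        rintro rfl
        apply hne
        simp; omega
      rcases h j m hji this with h | h <;> simp [h]
    · simp
  · intro h'
    exact absurd (Finset.HasAntidiagonal.mem_antidiagonal.2 hn) h'

/-- `E k = (5 ^ k - 1) / 4`. -/
def E : ℕ → ℕ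
  | 0 => 0
  | k + 1 => 1 + 5 * E k

lemma E_spec (k : ℕ) : 5 ^ k = 4 * E k + 1 := by
  induction k with
  | zero => simp [E]
  | succ k ih => rw [pow_succ, ih, E]; ring

lemma coeff_E {K : Type*} [Field K] [CharP K 5] (g : K[X]) (hd : g.natDegree ≤ 10)
    (h9 : g.coeff 9 = 0) (k : ℕ) :
    (g ^ E k).coeff (4 * E k) = g.coeff 4 ^ E k ∧
    (g ^ E k).coeff (8 * E k + 1) = 0 ∧
    (g ^ E k).coeff (8 * E k) = g.coeff 8 ^ E k := by
  have hbig : ∀ j, 10 < j → g.coeff j = 0 := fun j hj =>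
    coeff_eq_zero_of_natDegree_lt (by omega)
  induction k with
  | zero => simp [E, coeff_one]
  | succ k ih =>
    obtain ⟨i1, i2, i3⟩ := ih
    have hg : g ^ E (k + 1) = g * (g ^ E k) ^ 5 := by rw [E]; ring
    rw [hg]
    refine ⟨?_, ?_, ?_⟩
    · rw [coeff_single g _ _ 4 (4 * E k) (by rw [E]; ring), i1, E]
      · ring
      · intro j m hjm hj
        rw [E] at hjm
        left
        by_cases hj9 : j = 9
        · rw [hj9, h9]
        · exact hbig j (by omega)
    · apply coeff_zero_of
      intro j m hjm
      rw [E] at hjm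
      by_cases hj9 : j = 9
      · left; rw [hj9, h9]
      by_cases hj4 : j = 4
      · right
        have : m = 8 * E k + 1 := by omega
        rw [this, i2]
      · left; exact hbig j (by omega)
    · rw [coeff_single g _ _ 8 (8 * E k) (by rw [E]; ring), i3, E]
      · ring
      · intro j m hjm hj
        rw [E] at hjm
        by_cases hj3 : j = 3
        · right
          have : m = 8 * E k + 1 := by omega
          rw [this, i2]
        · left; exact hbig j (by omega)

lemma sum_pow_all {K : Type*} [Field K] [Fintype K] (i : ℕ) (hi : 0 < i) :
    ∑ x : K, x ^ i = if Fintype.card K - 1 ∣ i then -1 else 0 := by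
  classical
  rw [← FiniteField.sum_pow_units K i]
  have h0 : ∑ x : K, x ^ i = ∑ x : {x : K // x ≠ 0}, (x : K) ^ i := by
    rw [← Finset.sum_subtype (Finset.univ.erase (0 : K)) (by simp) (fun x => x ^ i)]
    rw [Finset.sum_erase]
    simp [hi.ne']
  rw [h0]
  exact (Fintype.sum_equiv unitsEquivNeZero _ _ (fun x => by simp)).symm

lemma sum_eval {K : Type*} [Field K] [Fintype K] (M : ℕ) (hM : 0 < M)
    (hc : Fintype.card K = M + 1) (P : K[X]) (hP : P.natDegree < 4 * M) :
    ∑ x : K, P.eval x = -(P.coeff M + P.coeff (2 * M) + P.coeff (3 * M)) := by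
  have h1 : ∀ x : K, P.eval x = ∑ i ∈ Finset.range (4 * M), P.coeff i * x ^ i := fun x =>
    eval_eq_sum_range' hP x
  simp_rw [h1]
  rw [Finset.sum_comm]
  simp_rw [← Finset.mul_sum]
  have hsub : ({M, 2 * M, 3 * M} : Finset ℕ) ⊆ Finset.range (4 * M) := by
    intro i hi
    simp only [Finset.mem_insert, Finset.mem_singleton] at hi
    rw [Finset.mem_range]; omega
  rw [← Finset.sum_subset hsub]
  · have hs : ∀ i, 0 < i → M ∣ i → ∑ x : K, x ^ i = -1 := by
      intro i hi hd
      rw [sum_pow_all i hi, hc, if_pos (by simpa using hd)]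
    rw [Finset.sum_insert, Finset.sum_insert, Finset.sum_singleton,
      hs M hM dvd_rfl, hs (2 * M) (by omega) (Dvd.intro_left _ rfl),
      hs (3 * M) (by omega) (Dvd.intro_left _ rfl)]
    · ring
    · simp; omega
    · simp; omega
  · intro i hi hni
    rcases Nat.eq_zero_or_pos i with rfl | hpos
    · simp
    · rw [sum_pow_all i hpos, hc, if_neg, mul_zero]
      simp only [Nat.add_sub_cancel]
      rintro ⟨s, rfl⟩
      rw [Finset.mem_range] at hi
      have hs4 : s < 4 := by
        by_contra hh
        have : M * 4 ≤ M * s := Nat.mul_le_mul_left M (by omega)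
        omega
      apply hni
      interval_cases s <;> simp_all [mul_comm]

lemma hermite {K : Type*} [Field K] [Fintype K] (M : ℕ) (hM : 0 < M)
    (hc : Fintype.card K = M + 1) (f : K[X]) (hf : Function.Bijective (fun x : K => f.eval x))
    (t : ℕ) (ht : t < M) (hP : (f ^ t).natDegree < 4 * M) :
    (f ^ t).coeff M + (f ^ t).coeff (2 * M) + (f ^ t).coeff (3 * M) = 0 := by
  have h1 := sum_eval M hM hc (f ^ t) hP
  have h2 : ∑ x : K, (f ^ t).eval x = ∑ x : K, x ^ t := by
    simp_rw [eval_pow]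
    exact hf.sum_comp (fun y : K => y ^ t)
  rw [h2, FiniteField.sum_pow_lt_card_sub_one K t (by rw [hc]; simpa using ht)] at h1
  exact neg_eq_zero.1 h1.symm


/-- The quintic attached to `l1, l2, l3, l4`. -/
noncomputable def Q {K : Type*} [Field K] (l1 l2 l3 l4 : K) : K[X] :=
  X ^ 5 + C l1 * X ^ 4 + C l2 * X ^ 3 + C l3 * X ^ 2 + C l4 * X

lemma Q_deg {K : Type*} [Field K] (l1 l2 l3 l4 : K) : (Q l1 l2 l3 l4).natDegree ≤ 5 := by
  unfold Q; compute_degree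

lemma Q_eval {K : Type*} [Field K] (l1 l2 l3 l4 x : K) :
    (Q l1 l2 l3 l4).eval x = x ^ 5 + l1 * x ^ 4 + l2 * x ^ 3 + l3 * x ^ 2 + l4 * x := by
  simp [Q]

lemma Q_pow_deg {K : Type*} [Field K] (l1 l2 l3 l4 : K) (t : ℕ) :
    ((Q l1 l2 l3 l4) ^ t).natDegree ≤ t * 5 :=
  natDegree_pow_le_of_le t (Q_deg l1 l2 l3 l4)

lemma nec1 {K : Type*} [Field K] [Fintype K] [CharP K 5] (k : ℕ) (hk : 0 < k)
    (hc : Fintype.card K = 5 ^ k) (l1 l2 l3 l4 : K)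
    (hf : Function.Bijective (fun x : K => (Q l1 l2 l3 l4).eval x)) : l1 = 0 := by
  have hE : 0 < E k := by
    obtain ⟨k, rfl⟩ := Nat.exists_eq_succ_of_ne_zero hk.ne'
    rw [Nat.succ_eq_add_one, E]; omega
  rw [E_spec] at hc
  have hdeg := Q_deg l1 l2 l3 l4
  have hp := Q_pow_deg l1 l2 l3 l4 (E k)
  have h := hermite (4 * E k) (by omega) hc _ hf (E k) (by omega) (by omega)
  rw [(coeff_E _ (by omega) (coeff_eq_zero_of_natDegree_lt (by omega)) k).1,
    coeff_eq_zero_of_natDegree_lt (n := 2 * (4 * E k)) (by omega),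
    coeff_eq_zero_of_natDegree_lt (n := 3 * (4 * E k)) (by omega)] at h
  have h4 : (Q l1 l2 l3 l4).coeff 4 = l1 := by
    simp [Q]
  rw [h4, add_zero, add_zero] at h
  exact eq_zero_of_pow_eq_zero h

lemma nec2 {K : Type*} [Field K] [Fintype K] [CharP K 5] (k : ℕ) (hk : 0 < k)
    (hc : Fintype.card K = 5 ^ k) (l2 l3 l4 : K)
    (hf : Function.Bijective (fun x : K => (Q 0 l2 l3 l4).eval x)) :
    (l3 ^ 2 + 2 * l2 * l4) ^ E k + (2 * l2) ^ E k = 0 := by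
  have hE : 0 < E k := by
    obtain ⟨k, rfl⟩ := Nat.exists_eq_succ_of_ne_zero hk.ne'
    rw [Nat.succ_eq_add_one, E]; omega
  rw [E_spec] at hc
  have hdeg := Q_pow_deg 0 l2 l3 l4 2
  have hp := Q_pow_deg 0 l2 l3 l4 (2 * E k)
  have h := hermite (4 * E k) (by omega) hc _ hf (2 * E k) (by omega) (by omega)
  have hQ : Q 0 l2 l3 l4 ^ 2 = X ^ 10 + C (2 * l2) * X ^ 8 + C (2 * l3) * X ^ 7
      + C (l2 ^ 2 + 2 * l4) * X ^ 6 + C (2 * l2 * l3) * X ^ 5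
      + C (l3 ^ 2 + 2 * l2 * l4) * X ^ 4 + C (2 * l3 * l4) * X ^ 3 + C (l4 ^ 2) * X ^ 2 := by
    simp only [Q, map_add, map_mul, map_pow, map_ofNat, map_zero]; ring
  have h9 : (Q 0 l2 l3 l4 ^ 2).coeff 9 = 0 := by
    rw [hQ]; simp only [coeff_add, coeff_C_mul, coeff_X_pow]; norm_num
  have h8 : (Q 0 l2 l3 l4 ^ 2).coeff 8 = 2 * l2 := by
    rw [hQ]; simp only [coeff_add, coeff_C_mul, coeff_X_pow]; norm_num
  have h4 : (Q 0 l2 l3 l4 ^ 2).coeff 4 = l3 ^ 2 + 2 * l2 * l4 := by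
    rw [hQ]; simp only [coeff_add, coeff_C_mul, coeff_X_pow]; norm_num
  obtain ⟨c1, -, c3⟩ := coeff_E _ (by omega) h9 k
  rw [coeff_eq_zero_of_natDegree_lt (n := 3 * (4 * E k)) (by omega), pow_mul, c1,
    show 2 * (4 * E k) = 8 * E k by ring, c3, h4, h8, add_zero] at h
  exact h

lemma nec3 {K : Type*} [Field K] [Fintype K] [CharP K 5] (k : ℕ)
    (hc : Fintype.card K = 5 ^ (k + 2)) (b c : K) (hb : b ≠ 0) (h2 : (2 : K) ≠ 0)
    (hf : Function.Bijective (fun x : K => (Q 0 b 0 c).eval x)) :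
    c = - b ^ 2 := by
  have hE : E (k + 2) = 6 + 25 * E k := by rw [E, E]; ring
  rw [E_spec, hE] at hc
  have hdeg1 := Q_deg 0 b 0 c
  have hdeg2 := Q_pow_deg 0 b 0 c 2
  have hdeg3 := Q_pow_deg 0 b 0 c 3
  have hp := Q_pow_deg 0 b 0 c (16 + 50 * E k)
  have h := hermite (4 * (6 + 25 * E k)) (by omega) hc _ hf (16 + 50 * E k) (by omega) (by omega)
  have hQ1 : Q 0 b 0 c = X ^ 5 + C b * X ^ 3 + C c * X ^ 1 := by
    simp [Q]
  have hQ2 : Q 0 b 0 c ^ 2 = X ^ 10 + C (2 * b) * X ^ 8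
      + C (b ^ 2 + 2 * c) * X ^ 6
      + C (2 * b * c) * X ^ 4 + C (c ^ 2) * X ^ 2 := by
    simp only [Q, map_add, map_mul, map_pow, map_ofNat, map_zero]; ring
  have hQ3 : Q 0 b 0 c ^ 3 = X ^ 15 + C (3 * b) * X ^ 13 + C (3 * b ^ 2 + 3 * c) * X ^ 11
      + C (b ^ 3 + 6 * b * c) * X ^ 9 + C (3 * b ^ 2 * c + 3 * c ^ 2) * X ^ 7
      + C (3 * b * c ^ 2) * X ^ 5 + C (c ^ 3) * X ^ 3 := by
    simp only [Q, map_add, map_mul, map_pow, map_ofNat, map_zero]; ring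
  have h9 : (Q 0 b 0 c ^ 2).coeff 9 = 0 := by
    rw [hQ2]; simp only [coeff_add, coeff_C_mul, coeff_X_pow]; norm_num
  have h8 : (Q 0 b 0 c ^ 2).coeff 8 = 2 * b := by
    rw [hQ2]; simp only [coeff_add, coeff_C_mul, coeff_X_pow]; norm_num
  have q4 : (Q 0 b 0 c ^ 3).coeff 4 = 0 := by
    rw [hQ3]; simp only [coeff_add, coeff_C_mul, coeff_X_pow]; norm_num
  have q9 : (Q 0 b 0 c ^ 3).coeff 9 = b ^ 3 + 6 * b * c := by
    rw [hQ3]; simp only [coeff_add, coeff_C_mul, coeff_X_pow]; norm_num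
  have q14 : (Q 0 b 0 c ^ 3).coeff 14 = 0 := by
    rw [hQ3]; simp only [coeff_add, coeff_C_mul, coeff_X_pow]; norm_num
  have f4 : (Q 0 b 0 c).coeff 4 = 0 := by
    rw [hQ1]; simp only [coeff_add, coeff_C_mul, coeff_X_pow]; norm_num
  have f3 : (Q 0 b 0 c).coeff 3 = b := by
    rw [hQ1]; simp only [coeff_add, coeff_C_mul, coeff_X_pow]; norm_num
  have f2 : (Q 0 b 0 c).coeff 2 = 0 := by
    rw [hQ1]; simp only [coeff_add, coeff_C_mul, coeff_X_pow]; norm_num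
  have hbig1 : ∀ j, 5 < j → (Q 0 b 0 c).coeff j = 0 := fun j hj =>
    coeff_eq_zero_of_natDegree_lt (by omega)
  have hbig3 : ∀ j, 15 < j → (Q 0 b 0 c ^ 3).coeff j = 0 := fun j hj =>
    coeff_eq_zero_of_natDegree_lt (by omega)
  obtain ⟨-, -, c3⟩ := coeff_E _ (by omega) h9 k
  have hfac : Q 0 b 0 c ^ (16 + 50 * E k) =
      Q 0 b 0 c * (Q 0 b 0 c ^ 3 * ((Q 0 b 0 c ^ 2) ^ E k) ^ 5) ^ 5 := by
    ring
  rw [hfac, coeff_zero_of, coeff_zero_of _ _ (3 * _),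
    coeff_single _ _ _ 3 (9 + 40 * E k) (by ring),
    coeff_single _ _ _ 9 (8 * E k) (by ring), c3, h8, q9, f3] at h
  · rw [zero_add, add_zero] at h
    have h2b : (2 * b) ^ E k ≠ 0 := pow_ne_zero _ (mul_ne_zero h2 hb)
    have h' : b ^ 3 + 6 * b * c = 0 := by
      simpa [hb, h2b] using h
    have h5 : (5 : K) = 0 := by exact_mod_cast CharP.cast_eq_zero K 5
    have : b * (c - - b ^ 2) = 0 := by linear_combination h' - b * c * h5
    rcases mul_eq_zero.1 this with h | h
    · exact absurd h hb
    · exact sub_eq_zero.1 h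
  · intro j m hjm hj
    left
    by_cases hj4 : j = 4
    · rw [hj4, q4]
    by_cases hj14 : j = 14
    · rw [hj14, q14]
    exact hbig3 j (by omega)
  · intro j m hjm hj
    left
    exact hbig1 j (by omega)
  · intro j m hjm
    left
    by_cases hj2 : j = 2
    · rw [hj2, f2]
    exact hbig1 j (by omega)
  · intro j m hjm
    left
    by_cases hj4 : j = 4
    · rw [hj4, f4]
    exact hbig1 j (by omega)

/-- Sufficiency: `x (x ^ 2 - α) ^ 2` with `α` a nonsquare is injective in characteristic `5`. -/
lemma suff2 {K : Type*} [Field K] (h5 : (5 : K) = 0) (b : K)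
    (hns : ¬ ∃ x : K, x ^ 2 = 2 * b) :
    Function.Injective (fun x : K => x ^ 5 + b * x ^ 3 + (-b ^ 2) * x) := by
  have h2 : (2 : K) ≠ 0 := by
    intro h
    exact one_ne_zero (α := K) (by linear_combination h5 - 2 * h)
  have hb : b ≠ 0 := by
    rintro rfl
    exact hns ⟨0, by ring⟩
  intro y x hxy
  simp only at hxy
  by_contra hne
  have hz : y - x ≠ 0 := sub_ne_zero.2 hne
  obtain ⟨z, hzdef⟩ : ∃ z, z = y - x := ⟨_, rfl⟩
  obtain rfl : y = x + z := by rw [hzdef]; ring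
  have hz : z ≠ 0 := by simpa using hz
  -- the key identity
  have key : z * (2 * b * (2 * x + z) ^ 2 + (z ^ 2 + 2 * b) ^ 2) = 0 := by
    linear_combination hxy +
      (-z * x ^ 4 - 2 * z ^ 2 * x ^ 3 - 2 * z ^ 3 * x ^ 2 - z ^ 4 * x
        + b * z ^ 3 + b * z ^ 2 * x + b * z * x ^ 2 + b ^ 2 * z) * h5
  have key2 : 2 * b * (2 * x + z) ^ 2 = - (z ^ 2 + 2 * b) ^ 2 := by
    rcases mul_eq_zero.1 key with h | h
    · exact absurd h hz
    · linear_combination h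
  by_cases hw : 2 * x + z = 0
  · have h0 : z ^ 2 + 2 * b = 0 := by
      have : (z ^ 2 + 2 * b) ^ 2 = 0 := by
        rw [hw] at key2; linear_combination key2
      exact eq_zero_of_pow_eq_zero this
    exact hns ⟨2 * z, by linear_combination -h0 + z ^ 2 * h5⟩
  · refine hns ⟨2 * (z ^ 2 + 2 * b) / (2 * x + z), ?_⟩
    rw [div_pow, div_eq_iff (pow_ne_zero 2 hw)]
    linear_combination -key2 + (z ^ 2 + 2 * b) ^ 2 * h5


lemma shift_bij {K : Type*} [Field K] (h5 : (5 : K) = 0) (l2 l3 l4 : K) (hl2 : l2 ≠ 0) :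
    Function.Bijective (fun x : K => (Q 0 l2 l3 l4).eval x) ↔
    Function.Bijective (fun x : K => (Q 0 l2 0 (l4 + 3 * l3 ^ 2 * l2⁻¹)).eval x) := by
  obtain ⟨r, rfl⟩ : ∃ r, l3 = r * l2 := ⟨l3 * l2⁻¹, by field_simp⟩
  have hmu : l4 + 3 * (r * l2) ^ 2 * l2⁻¹ = l4 + 3 * r ^ 2 * l2 := by field_simp
  rw [hmu]
  have hcomp : (fun x : K => (Q 0 l2 0 (l4 + 3 * r ^ 2 * l2)).eval x) =
      (Equiv.addRight (-(Q 0 l2 (r * l2) l4).eval (3 * r))) ∘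
        (fun x : K => (Q 0 l2 (r * l2) l4).eval x) ∘ (Equiv.addRight (3 * r)) := by
    funext x
    simp only [Function.comp, Equiv.coe_addRight, Q_eval]
    linear_combination (-3 * r * x ^ 4 - 18 * r ^ 2 * x ^ 3 - 54 * r ^ 3 * x ^ 2 - 81 * r ^ 4 * x
      - 2 * r * l2 * x ^ 2 - 6 * r ^ 2 * l2 * x) * h5
  rw [hcomp, Equiv.comp_bijective, Equiv.bijective_comp]

lemma exists_const {K : Type*} [Field K] [Fintype K] (hc : Fintype.card K = 5)
    (h5 : (5 : K) = 0) (b : K) (hb : b ≠ 0) : b = 1 ∨ b = -1 ∨ b = 2 ∨ b = -2 := by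
  have h := FiniteField.pow_card_sub_one_eq_one b hb
  rw [hc] at h
  have h' : b ^ 4 = 1 := by simpa using h
  have : (b - 1) * ((b + 1) * ((b - 2) * (b + 2))) = 0 := by
    linear_combination h' + (1 - b ^ 2) * h5
  simp only [mul_eq_zero, sub_eq_zero, add_eq_zero_iff_eq_neg] at this
  exact this

theorem mainK {K : Type*} [Field K] [Fintype K] (k : ℕ) (hk : 0 < k)
    (hc : Fintype.card K = 5 ^ k) (l1 l2 l3 l4 : K) (hl4 : l4 ≠ 0) :
    Function.Bijective (fun x : K => (Q l1 l2 l3 l4).eval x) ↔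
    ((l1 = 0 ∧ l2 = 0 ∧ l3 = 0 ∧ ¬∃ x : K, x ^ 4 = -l4) ∨
     (l1 = 0 ∧ l2 ≠ 0 ∧ -l2 ^ 2 = l4 + 3 * l3 ^ 2 * l2⁻¹ ∧ ¬∃ x : K, x ^ 2 = 2 * l2) ∨
     (k = 1 ∧ l1 = 0 ∧ (l2 = 2 ∨ l2 = -2) ∧ l4 + 3 * l3 ^ 2 * l2⁻¹ = 4)) := by
  have : Fact (Nat.Prime 5) := ⟨by norm_num⟩
  have : CharP K 5 := charP_of_card_eq_prime_pow hc
  have h5 : (5 : K) = 0 := by exact_mod_cast CharP.cast_eq_zero K 5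
  have h2 : (2 : K) ≠ 0 := by
    intro h
    exact one_ne_zero (α := K) (by linear_combination h5 - 2 * h)
  have hE : 0 < E k := by
    obtain ⟨k, rfl⟩ := Nat.exists_eq_succ_of_ne_zero hk.ne'
    rw [Nat.succ_eq_add_one, E]; omega
  constructor
  · intro hf
    obtain rfl := nec1 k hk hc l1 l2 l3 l4 hf
    by_cases hl2 : l2 = 0
    · subst hl2
      have h3 := nec2 k hk hc 0 l3 l4 hf
      have hl3 : l3 = 0 := by
        rw [mul_zero, zero_pow hE.ne', zero_mul, add_zero, add_zero] at h3
        exact eq_zero_of_pow_eq_zero (eq_zero_of_pow_eq_zero h3)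
      subst hl3
      refine Or.inl ⟨rfl, rfl, rfl, ?_⟩
      rintro ⟨x, hx⟩
      have hx0 : x = 0 := by
        apply hf.1
        simp only [Q_eval]
        linear_combination x * hx
      rw [hx0] at hx
      exact hl4 (by linear_combination hx)
    · right
      have hf' := (shift_bij h5 l2 l3 l4 hl2).1 hf
      generalize l4 + 3 * l3 ^ 2 * l2⁻¹ = c at hf' ⊢
      have hsq : c = -l2 ^ 2 → ¬∃ x : K, x ^ 2 = 2 * l2 := by
        rintro rfl ⟨x, hx⟩
        have hx0 : x = 0 := by
          apply hf'.1
          simp only [Q_eval]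
          linear_combination (x ^ 3 + 3 * l2 * x) * hx + x * l2 ^ 2 * h5
        rw [hx0] at hx
        exact mul_ne_zero h2 hl2 (by linear_combination -hx)
      by_cases hk1 : k = 1
      · subst hk1
        have h3 := nec2 1 hk hc l2 0 c hf'
        simp only [E] at h3
        have hc1 : c = -1 := by
          have : (2 * l2) * (c + 1) = 0 := by linear_combination h3
          rcases mul_eq_zero.1 this with h | h
          · exact absurd h (mul_ne_zero h2 hl2)
          · linear_combination h
        have hb := exists_const (by simpa using hc) h5 l2 hl2
        have h14 : c = 4 := by rw [hc1]; linear_combination -h5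
        rcases hb with rfl | rfl | hb
        · left
          have : c = -1 ^ 2 := by rw [hc1]; ring
          exact ⟨rfl, hl2, this.symm, hsq this⟩
        · left
          have : c = -(-1) ^ 2 := by rw [hc1]; ring
          exact ⟨rfl, hl2, this.symm, hsq this⟩
        · right
          exact ⟨rfl, rfl, hb, h14⟩
      · left
        obtain ⟨m, rfl⟩ : ∃ m, k = m + 2 := ⟨k - 2, by omega⟩
        have hc2 := nec3 m hc l2 c hl2 h2 hf'
        exact ⟨rfl, hl2, hc2.symm, hsq hc2⟩
  · rintro (⟨rfl, rfl, rfl, hn⟩ | ⟨rfl, hl2, he, hn⟩ | ⟨rfl, rfl, hb, he⟩)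
    · apply Finite.injective_iff_bijective.1
      intro x y hxy
      simp only [Q_eval] at hxy
      by_contra hne
      have hz : x - y ≠ 0 := sub_ne_zero.2 hne
      have : (x - y) * ((x - y) ^ 4 + l4) = 0 := by
        linear_combination hxy + (-x ^ 4 * y + 2 * x ^ 3 * y ^ 2 - 2 * x ^ 2 * y ^ 3
          + x * y ^ 4) * h5
      rcases mul_eq_zero.1 this with h | h
      · exact hz h
      · exact hn ⟨x - y, by linear_combination h⟩
    · rw [shift_bij h5 l2 l3 l4 hl2, ← he]
      apply Finite.injective_iff_bijective.1
      convert suff2 h5 l2 hn using 2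
      rw [Q_eval]; ring
    · have hl2 : l2 ≠ 0 := by
        rcases hb with rfl | rfl
        · exact h2
        · exact neg_ne_zero.2 h2
      rw [shift_bij h5 l2 l3 l4 hl2, he]
      apply Finite.injective_iff_bijective.1
      have hp : ∀ x : K, x ^ 5 = x := by
        intro x
        have := FiniteField.pow_card x
        rwa [hc, pow_one] at this
      intro x y hxy
      simp only [Q_eval] at hxy
      have h3 : l2 * (x ^ 3 - y ^ 3) = 0 := by
        linear_combination hxy - hp x + hp y - (x - y) * h5
      have h3' : x ^ 3 = y ^ 3 := by
        rcases mul_eq_zero.1 h3 with h | h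
        · exact absurd h hl2
        · exact sub_eq_zero.1 h
      calc x = x ^ 9 := by
            rw [show x ^ 9 = x ^ 5 * x ^ 4 by ring, hp x, ← hp x]; simp only [hp]; 
            rw [← pow_succ', hp]
        _ = y ^ 9 := by
            rw [show x ^ 9 = (x ^ 3) ^ 3 by ring, h3']; ring
        _ = y := by
            rw [show y ^ 9 = y ^ 5 * y ^ 4 by ring, hp y, ← pow_succ', hp]

section transfer

variable {K F : Type*} [Field K] [Fintype K] [Field F] [Fintype F] [Algebra K F]

lemma mem_range (q : ℕ) (hc : Fintype.card K = q) (x : F) (hx : x ^ q = x) :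
    ∃ y : K, algebraMap K F y = x := by
  classical
  have hq : 1 < q := hc ▸ Fintype.one_lt_card
  by_contra hno
  have hne : (X ^ q - X : F[X]) ≠ 0 := FiniteField.X_pow_card_sub_X_ne_zero F hq
  have hsub : insert x (Finset.univ.image (algebraMap K F)) ⊆ (X ^ q - X : F[X]).roots.toFinset := by
    intro z hz
    rw [Multiset.mem_toFinset, mem_roots hne]
    simp only [IsRoot, eval_sub, eval_pow, eval_X, sub_eq_zero]
    rcases Finset.mem_insert.1 hz with rfl | hz
    · exact hx
    · obtain ⟨y, -, rfl⟩ := Finset.mem_image.1 hz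
      rw [← map_pow, ← hc, FiniteField.pow_card]
  have h1 := Finset.card_le_card hsub
  rw [Finset.card_insert_of_notMem, Finset.card_image_of_injective _ (algebraMap K F).injective,
    Finset.card_univ, hc] at h1
  · have h2 := Multiset.toFinset_card_le (X ^ q - X : F[X]).roots
    have h3 := card_roots' (X ^ q - X : F[X])
    rw [FiniteField.X_pow_card_sub_X_natDegree_eq F hq] at h3
    omega
  · intro h
    obtain ⟨y, -, hy⟩ := Finset.mem_image.1 h
    exact hno ⟨y, hy⟩

/-- The abstract reduction: `N` is a multiplicative "norm" onto `K`. -/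
lemma reduction (N : F →* K) (hNs : Function.Surjective N)
    (hN0 : ∀ x, N x = 0 ↔ x = 0) (a : F) (ha : a ≠ 0)
    (h : K → K) (hh : ∀ y, h y = y * N (algebraMap K F y + a)) :
    Function.Bijective (fun x : F => a⁻¹ * (x * algebraMap K F (N x)) + x) ↔
      Function.Bijective h := by
  have hg : ∀ x : F, a * (a⁻¹ * (x * algebraMap K F (N x)) + x) = x * (algebraMap K F (N x) + a) := by
    intro x; field_simp
  have hNg : ∀ x : F, N (x * (algebraMap K F (N x) + a)) = h (N x) := by
    intro x; rw [map_mul, hh]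
  rw [← Finite.injective_iff_bijective, ← Finite.injective_iff_bijective]
  have hinj : Function.Injective (fun x : F => a⁻¹ * (x * algebraMap K F (N x)) + x) ↔
      Function.Injective (fun x : F => x * (algebraMap K F (N x) + a)) := by
    constructor
    · intro H x y hxy
      apply H
      apply mul_left_cancel₀ ha
      simp only [hg]; exact hxy
    · intro H x y hxy
      apply H
      simp only [← hg]
      simp only at hxy
      rw [hxy]
  rw [hinj]
  constructor
  · intro H y y' hyy
    obtain ⟨x, rfl⟩ := hNs y
    obtain ⟨x', rfl⟩ := hNs y'
    rw [← hNg, ← hNg] at hyy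
    by_cases h0 : x * (algebraMap K F (N x) + a) = 0
    · have h0' : x' * (algebraMap K F (N x') + a) = 0 := by
        rw [← hN0, ← hyy, hN0]; exact h0
      have : x = x' := H (by simp only [h0, h0'])
      rw [this]
    · obtain ⟨u, hu⟩ : ∃ u, u * (x * (algebraMap K F (N x) + a)) =
          x' * (algebraMap K F (N x') + a) := ⟨_ / _, div_mul_cancel₀ _ h0⟩
      have hNu : N u = 1 := by
        have := congrArg N hu
        rw [map_mul, ← hyy] at this
        exact mul_right_cancel₀ (fun h => h0 ((hN0 _).1 h)) (this.trans (one_mul _).symm)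
      have : u * x = x' := by
        apply H
        simp only
        rw [← hu, map_mul, hNu, one_mul, mul_assoc]
      rw [← this, map_mul, hNu, one_mul]
  · intro H x x' hxx
    simp only at hxx
    have hN : N x = N x' := by
      apply H
      rw [← hNg, ← hNg, hxx]
    rw [← hN] at hxx
    by_cases h0 : algebraMap K F (N x) + a = 0
    · exfalso
      have h1 : N x = 0 := by
        apply H
        rw [hh, hh, h0, (hN0 0).2 rfl, mul_zero, zero_mul]
      rw [h1, map_zero, zero_add] at h0
      exact ha h0
    · exact mul_right_cancel₀ h0 hxx

end transfer

end CPP5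

lemma CPP5.exists_sub (k : ℕ) (hk : 0 < k) (F : Type*) [Field F] [Fintype F]
    (hF : Fintype.card F = 5 ^ (4 * k)) :
    ∃ (K : Type) (_ : Field K) (_ : Fintype K) (_ : Algebra K F), Fintype.card K = 5 ^ k := by
  have : Fact (Nat.Prime 5) := ⟨by norm_num⟩
  have : CharP F 5 := charP_of_card_eq_prime_pow hF
  let _ : Algebra (ZMod 5) F := ZMod.algebra F 5
  have hfr : Module.finrank (ZMod 5) (GaloisField 5 k) ∣ Module.finrank (ZMod 5) F := by
    rw [GaloisField.finrank 5 hk.ne']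
    have h1 := FiniteField.pow_finrank_eq_card 5 F
    rw [hF] at h1
    rw [Nat.pow_right_injective (le_refl _ |>.trans (by norm_num : 2 ≤ 5)) h1]
    exact Dvd.intro_left 4 rfl
  obtain ⟨ψ⟩ := FiniteField.nonempty_algHom_of_finrank_dvd hfr
  have : Finite (GaloisField 5 k) := Finite.of_injective _ ψ.toRingHom.injective
  refine ⟨GaloisField 5 k, inferInstance, Fintype.ofFinite _, ψ.toRingHom.toAlgebra, ?_⟩
  rw [Fintype.card_eq_nat_card, GaloisField.card 5 k hk.ne']


/-- **Theorem (p = 5, r = 4).** Let `k ≥ 1`, `n = 4k`, `d = (5^{4k} - 1)/(5^k - 1) + 1`,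
and let `F` be the finite field with `5^n` elements. For `a ∈ F`, `a ≠ 0`, let
`λ₁, λ₂, λ₃, λ₄` be the elementary symmetric functions of `a, a^{5^k}, a^{5^{2k}},
a^{5^{3k}}`. Then `a⁻¹ x^d` is a complete permutation polynomial over `F` iff one of
the three listed conditions holds, where "fourth power" and "square" are taken in the
subfield `F_{5^k} = {x : F | x^{5^k} = x}`. -/
theorem stmt_7 (k : ℕ) (hk : 0 < k)
    (n : ℕ) (hn : n = 4 * k) (d : ℕ) (hd : d = (5 ^ (4 * k) - 1) / (5 ^ k - 1) + 1)
    (F : Type*) [Field F] [Fintype F] (hF : Fintype.card F = 5 ^ n)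
    (a : F) (ha : a ≠ 0)
    (a0 a1 a2 a3 : F) (ha0 : a0 = a) (ha1 : a1 = a ^ (5 ^ k))
    (ha2 : a2 = a ^ (5 ^ (2 * k))) (ha3 : a3 = a ^ (5 ^ (3 * k)))
    (l1 l2 l3 l4 : F)
    (hl1 : l1 = a0 + a1 + a2 + a3)
    (hl2 : l2 = a0 * a1 + a0 * a2 + a0 * a3 + a1 * a2 + a1 * a3 + a2 * a3)
    (hl3 : l3 = a0 * a1 * a2 + a0 * a1 * a3 + a0 * a2 * a3 + a1 * a2 * a3)
    (hl4 : l4 = a0 * a1 * a2 * a3) :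
    (Function.Bijective (fun x : F => a⁻¹ * x ^ d) ∧
     Function.Bijective (fun x : F => a⁻¹ * x ^ d + x)) ↔
    ((l1 = 0 ∧ l2 = 0 ∧ l3 = 0 ∧
        ¬∃ x : F, x ^ (5 ^ k) = x ∧ x ^ 4 = -l4) ∨
     (l1 = 0 ∧ l2 ≠ 0 ∧ -l2 ^ 2 = l4 + 3 * l3 ^ 2 * l2⁻¹ ∧
        ¬∃ x : F, x ^ (5 ^ k) = x ∧ x ^ 2 = 2 * l2) ∨
     (k = 1 ∧ l1 = 0 ∧ (l2 = 2 ∨ l2 = -2) ∧ l4 + 3 * l3 ^ 2 * l2⁻¹ = 4)) := by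
  subst hn
  obtain ⟨K, _, _, _, hK⟩ := CPP5.exists_sub k hk F hF
  have : Fact (Nat.Prime 5) := ⟨by norm_num⟩
  have : CharP F 5 := charP_of_card_eq_prime_pow hF
  have hq1 : 1 < 5 ^ k := Nat.one_lt_pow hk.ne' (by norm_num)
  -- the Frobenius
  let φ : F →+* F := iterateFrobenius F 5 k
  have hφ : ∀ x : F, φ x = x ^ 5 ^ k := fun x => iterateFrobenius_def 5 k x
  have hφ2 : ∀ x : F, x ^ 5 ^ (2 * k) = φ (φ x) := by
    intro x; rw [hφ, hφ, ← pow_mul, ← pow_add, two_mul]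
  have hφ3 : ∀ x : F, x ^ 5 ^ (3 * k) = φ (φ (φ x)) := by
    intro x; rw [hφ, hφ, hφ, ← pow_mul, ← pow_mul, ← pow_add, ← pow_add]; congr 2; ring
  have hφ4 : ∀ x : F, φ (φ (φ (φ x))) = x := by
    intro x
    rw [hφ, hφ, hφ, hφ, ← pow_mul, ← pow_mul, ← pow_mul, ← pow_add, ← pow_add, ← pow_add,
      show k + (k + (k + k)) = 4 * k by ring, ← hF, FiniteField.pow_card]
  have hφK : ∀ y : K, φ (algebraMap K F y) = algebraMap K F y := by
    intro y; rw [hφ, ← map_pow, ← hK, FiniteField.pow_card]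
  have hmem : ∀ x : F, φ x = x → ∃ y : K, algebraMap K F y = x := fun x hx =>
    CPP5.mem_range (5 ^ k) hK x (by rw [← hφ, hx])
  -- the exponent
  have hs : (5 ^ (4 * k) - 1) / (5 ^ k - 1) = 1 + 5 ^ k + 5 ^ (2 * k) + 5 ^ (3 * k) := by
    apply Nat.div_eq_of_eq_mul_left (by omega)
    rw [mul_comm 4, mul_comm 2, mul_comm 3, pow_mul, pow_mul, pow_mul]
    obtain ⟨q, hq⟩ : ∃ q, 5 ^ k = q + 1 := ⟨5 ^ k - 1, by omega⟩
    rw [hq, Nat.add_sub_cancel]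
    apply Nat.sub_eq_of_eq_add
    ring
  have hNpow : ∀ x : F, algebraMap K F (Algebra.norm K x) =
      x ^ ((5 ^ (4 * k) - 1) / (5 ^ k - 1)) := by
    intro x
    rw [FiniteField.algebraMap_norm_eq_pow, ← Fintype.card_eq_nat_card,
      ← Fintype.card_eq_nat_card, hF, hK]
  have hN : ∀ x : F, algebraMap K F (Algebra.norm K x) = x * φ x * φ (φ x) * φ (φ (φ x)) := by
    intro x
    rw [hNpow, hs, pow_add, pow_add, pow_add, pow_one, hφ2, hφ3, ← hφ]
  have hxd : ∀ x : F, x ^ d = x * algebraMap K F (Algebra.norm K x) := by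
    intro x; rw [hNpow, hd, pow_succ']
  have hinjK := (algebraMap K F).injective
  have hN0 : ∀ x : F, Algebra.norm K x = 0 ↔ x = 0 := fun x => Algebra.norm_eq_zero_iff
  rw [← hφ] at ha1
  rw [hφ2] at ha2
  rw [hφ3] at ha3
  have e0 : φ a0 = a1 := by rw [ha0, ha1]
  have e1 : φ a1 = a2 := by rw [ha1, ha2]
  have e2 : φ a2 = a3 := by rw [ha2, ha3]
  have e3 : φ a3 = a0 := by rw [ha3, hφ4, ha0]
  obtain ⟨L1, hL1⟩ := hmem l1 (by rw [hl1]; simp only [map_add, map_mul, e0, e1, e2, e3]; ring)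
  obtain ⟨L2, hL2⟩ := hmem l2 (by rw [hl2]; simp only [map_add, map_mul, e0, e1, e2, e3]; ring)
  obtain ⟨L3, hL3⟩ := hmem l3 (by rw [hl3]; simp only [map_add, map_mul, e0, e1, e2, e3]; ring)
  obtain ⟨L4, hL4⟩ := hmem l4 (by rw [hl4]; simp only [map_add, map_mul, e0, e1, e2, e3]; ring)
  have hl40 : L4 ≠ 0 := by
    rintro rfl
    have : Algebra.norm K a = 0 := by
      apply hinjK
      rw [hN, hL4, hl4, ha0, ha1, ha2, ha3]
    exact ha ((hN0 a).1 this)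
  -- the monomial is always a permutation
  have hfirst : Function.Bijective (fun x : F => a⁻¹ * x ^ d) := by
    apply Finite.injective_iff_bijective.1
    intro x y hxy
    have h1 : x * algebraMap K F (Algebra.norm K x) = y * algebraMap K F (Algebra.norm K y) := by
      rw [← hxd, ← hxd]
      exact mul_left_cancel₀ (inv_ne_zero ha) hxy
    have h2 : ∀ z : F, algebraMap K F (Algebra.norm K (z * algebraMap K F (Algebra.norm K z))) =
        (algebraMap K F (Algebra.norm K z)) ^ 5 := by
      intro z
      rw [map_mul, map_mul, hN (algebraMap K F _)]
      simp only [hφK]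
      ring
    have h3 : (algebraMap K F (Algebra.norm K x)) ^ 5 = (algebraMap K F (Algebra.norm K y)) ^ 5 := by
      rw [← h2, ← h2, h1]
    have h4 : algebraMap K F (Algebra.norm K x) = algebraMap K F (Algebra.norm K y) :=
      (frobenius F 5).injective h3
    by_cases h0 : algebraMap K F (Algebra.norm K y) = 0
    · have hx0 : x = 0 := by
        rw [← hN0]; apply hinjK; rw [h4, h0, map_zero]
      have hy0 : y = 0 := by
        rw [← hN0]; apply hinjK; rw [h0, map_zero]
      rw [hx0, hy0]
    · rw [h4] at h1
      exact mul_right_cancel₀ h0 h1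
  have hred := CPP5.reduction (Algebra.norm K (S := F)) (FiniteField.norm_surjective K F) hN0 a ha
    (fun y => (CPP5.Q L1 L2 L3 L4).eval y) (by
      intro y
      apply hinjK
      rw [CPP5.Q_eval, map_mul, hN]
      simp only [map_add, map_mul, map_pow, hφK, hL1, hL2, hL3, hL4]
      rw [← ha1, ← ha0, e1, e2, hl1, hl2, hl3, hl4]
      ring)
  simp only [← hxd] at hred
  rw [hred, CPP5.mainK k hk hK L1 L2 L3 L4 hl40]
  have hex4 : (∃ x : F, x ^ 5 ^ k = x ∧ x ^ 4 = -l4) ↔ ∃ x : K, x ^ 4 = -L4 := by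
    constructor
    · rintro ⟨x, hx, hx4⟩
      obtain ⟨y, rfl⟩ := hmem x (by rw [hφ, hx])
      refine ⟨y, hinjK ?_⟩
      rw [map_pow, hx4, map_neg, hL4]
    · rintro ⟨y, hy⟩
      refine ⟨algebraMap K F y, by rw [← hφ, hφK], ?_⟩
      rw [← map_pow, hy, map_neg, hL4]
  have hex2 : (∃ x : F, x ^ 5 ^ k = x ∧ x ^ 2 = 2 * l2) ↔ ∃ x : K, x ^ 2 = 2 * L2 := by
    constructor
    · rintro ⟨x, hx, hx4⟩
      obtain ⟨y, rfl⟩ := hmem x (by rw [hφ, hx])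
      refine ⟨y, hinjK ?_⟩
      rw [map_pow, hx4, map_mul, hL2, map_ofNat]
    · rintro ⟨y, hy⟩
      refine ⟨algebraMap K F y, by rw [← hφ, hφK], ?_⟩
      rw [← map_pow, hy, map_mul, hL2, map_ofNat]
  have z1 : l1 = 0 ↔ L1 = 0 := by rw [← hL1, map_eq_zero]
  have z2 : l2 = 0 ↔ L2 = 0 := by rw [← hL2, map_eq_zero]
  have z3 : l3 = 0 ↔ L3 = 0 := by rw [← hL3, map_eq_zero]
  have t2 : l2 = 2 ↔ L2 = 2 := by rw [← hL2, ← hinjK.eq_iff, map_ofNat]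
  have t2' : l2 = -2 ↔ L2 = -2 := by rw [← hL2, ← hinjK.eq_iff, map_neg, map_ofNat]
  have m1 : (-l2 ^ 2 = l4 + 3 * l3 ^ 2 * l2⁻¹) ↔ (-L2 ^ 2 = L4 + 3 * L3 ^ 2 * L2⁻¹) := by
    rw [← hinjK.eq_iff]
    simp only [map_add, map_mul, map_neg, map_pow, map_inv₀, map_ofNat, hL2, hL3, hL4]
  have m2 : (l4 + 3 * l3 ^ 2 * l2⁻¹ = 4) ↔ (L4 + 3 * L3 ^ 2 * L2⁻¹ = 4) := by
    rw [← hinjK.eq_iff]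
    simp only [map_add, map_mul, map_pow, map_inv₀, map_ofNat, hL2, hL3, hL4]
  rw [hex4, hex2, z1, ne_eq, ne_eq, z2, z3, t2, t2', m1, m2]
  exact and_iff_right hfirst
end

section
/- Let k be a positive integer, n = 4k, and d = (5^{4k} - 1)/(5^k - 1) + 1. If a ∈ F_{5^n} satisfies a^{2(5^k - 1)} = -1 or a^{5^k - 1} = -1, then a^{-1}x^d is a complete permutation polynomial over F_{5^n}; that is, both x ↦ a^{-1}x^d and x ↦ a^{-1}x^d + x are bijections of F_{5^n}. -/
theorem cpp_fixed_ne {F : Type*} [Field F] (φ : F →+* F) (b c t : F) (hb : φ b = c * b)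
    (hc : c ≠ 1) (ht : φ t = t) : b * t + 1 ≠ 0 := by
  intro h
  have h1 := congrArg φ h
  simp only [map_add, map_mul, map_one, map_zero, hb, ht] at h1
  apply hc
  have : (c - 1) * (b * t) = 0 := by linear_combination h1 - h
  rcases mul_eq_zero.1 this with h2 | h2
  · linear_combination h2
  · rw [h2] at h; simp at h

/-- The case `φ b = - b`: injectivity of `u (1 - u^2)^2` on the `-1`-eigenspace. -/
theorem cpp_case_neg {F : Type*} [Field F] (h5 : (5 : F) = 0) (φ : F →+* F) (u v : F)
    (hu : φ u = -u) (hv : φ v = -v)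
    (h : u * (1 - u ^ 2) ^ 2 = v * (1 - v ^ 2) ^ 2) : u = v := by
  have h2 : (2 : F) ≠ 0 := by
    intro h2; apply one_ne_zero (α := F); linear_combination h5 - 2 * h2
  by_contra hne
  have hw : u - v ≠ 0 := sub_ne_zero.2 hne
  have key : (u - v) * (((u - v) ^ 2 + 1) ^ 2 - (v + 3 * (u - v)) ^ 2) = 0 := by
    have e : ∀ w : F, (w + v) * (1 - (w + v) ^ 2) ^ 2 - v * (1 - v ^ 2) ^ 2
        - w * ((w ^ 2 + 1) ^ 2 - (v + 3 * w) ^ 2)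
        = 5 * (w ^ 3 + w ^ 4 * v + 2 * w ^ 3 * v ^ 2 + 2 * w ^ 2 * v ^ 3 + w * v ^ 4
            - w * v ^ 2) := by
      intro w; ring
    have e1 := e (u - v)
    rw [sub_add_cancel, h, h5] at e1
    linear_combination -e1
  have key2 := (mul_eq_zero.1 key).resolve_left hw
  have key3 : ((u - v) ^ 2 + 1 - (v + 3 * (u - v))) * ((u - v) ^ 2 + 1 + (v + 3 * (u - v))) = 0 := by
    linear_combination key2
  have h3 : φ 3 = 3 := map_ofNat φ 3
  have hsq : (u - v) ^ 2 + 1 = 0 := by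
    apply (mul_eq_zero.1 (?_ : 2 * ((u - v) ^ 2 + 1) = 0)).resolve_left h2
    rcases mul_eq_zero.1 key3 with hh | hh
    all_goals
      have h1 := congrArg φ hh
      simp only [map_add, map_sub, map_mul, map_pow, map_one, map_zero, hu, hv, h3] at h1
      linear_combination h1 + hh
  have hf : ((u - v) - 2) * ((u - v) + 2) = 0 := by linear_combination hsq - h5
  have h22 : φ 2 = 2 := map_ofNat φ 2
  apply hw
  apply (mul_eq_zero.1 (?_ : 2 * (u - v) = 0)).resolve_left h2
  rcases mul_eq_zero.1 hf with hh | hh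
  all_goals
    have h1 := congrArg φ hh
    simp only [map_add, map_sub, map_zero, hu, hv, h22] at h1
    linear_combination hh - h1

/-- The case `φ b = c b`, `c^2 = -1`: injectivity of `u - u^5` on the `c`-eigenspace. -/
theorem cpp_case_sq {F : Type*} [Field F] (h5 : (5 : F) = 0) (φ : F →+* F) (c u v : F)
    (hc : c ^ 2 = -1) (hu : φ u = c * u) (hv : φ v = c * v)
    (h : u * (1 - u ^ 4) = v * (1 - v ^ 4)) : u = v := by
  have hc1 : c ≠ 1 := by
    rintro rfl
    apply one_ne_zero (α := F); linear_combination h5 - 2 * hc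
  by_contra hne
  have hw : u - v ≠ 0 := sub_ne_zero.2 hne
  have key : (u - v) * (((u - v) - 1) * ((u - v) + 1) * (((u - v) - 2) * ((u - v) + 2))) = 0 := by
    have e : ∀ w : F, (w + v) * (1 - (w + v) ^ 4) - v * (1 - v ^ 4)
        + w * ((w - 1) * (w + 1) * ((w - 2) * (w + 2)))
        = 5 * (w - w ^ 3 - w ^ 4 * v - 2 * w ^ 3 * v ^ 2 - 2 * w ^ 2 * v ^ 3 - w * v ^ 4) := by
      intro w; ring
    have e1 := e (u - v)
    rw [sub_add_cancel, h, h5] at e1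
    linear_combination e1
  have key2 := (mul_eq_zero.1 key).resolve_left hw
  have h22 : φ 2 = 2 := map_ofNat φ 2
  have hz : (c - 1) * (u - v) = 0 := by
    rcases mul_eq_zero.1 key2 with hh | hh <;> rcases mul_eq_zero.1 hh with hh | hh
    all_goals
      have h1 := congrArg φ hh
      simp only [map_add, map_sub, map_one, map_zero, hu, hv, h22] at h1
      linear_combination h1 - hh
  exact (mul_ne_zero (sub_ne_zero.2 hc1) hw) hz

theorem cpp_core {F : Type*} [Field F] (h5 : (5 : F) = 0) (φ : F →+* F) (b c : F)
    (hφ : ∀ x, φ (φ (φ (φ x))) = x) (hb0 : b ≠ 0) (hb : φ b = c * b)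
    (hcc : φ c = c) (hc : c ^ 2 = -1 ∨ c = -1) (x y : F)
    (h : x * (b * (x * φ x * φ (φ x) * φ (φ (φ x))) + 1)
      = y * (b * (y * φ y * φ (φ y) * φ (φ (φ y))) + 1)) : x = y := by
  have hc1 : c ≠ 1 := by
    rintro rfl
    apply one_ne_zero (α := F)
    rcases hc with hc | hc
    · linear_combination h5 - 2 * hc
    · linear_combination h5 - 2 * hc
  obtain ⟨T, hT⟩ : ∃ T, T = x * φ x * φ (φ x) * φ (φ (φ x)) := ⟨_, rfl⟩
  obtain ⟨S, hS⟩ : ∃ S, S = y * φ y * φ (φ y) * φ (φ (φ y)) := ⟨_, rfl⟩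
  have hφT : φ T = T := by
    rw [hT]; simp only [map_mul, hφ]; ring
  have hφS : φ S = S := by
    rw [hS]; simp only [map_mul, hφ]; ring
  rw [← hT, ← hS] at h
  have h1 := congrArg φ h
  have h2 := congrArg φ h1
  have h3 := congrArg φ h2
  simp only [map_add, map_mul, map_one, hb, hφT, hφS, hcc] at h1 h2 h3
  have hN : T * ((b * T + 1) * (c * b * T + 1) * (c * (c * b) * T + 1)
        * (c * (c * (c * b)) * T + 1))
      = S * ((b * S + 1) * (c * b * S + 1) * (c * (c * b) * S + 1)
        * (c * (c * (c * b)) * S + 1)) := by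
    have := congrArg₂ (· * ·) (congrArg₂ (· * ·) (congrArg₂ (· * ·) h h1) h2) h3
    calc _ = (x * φ x * φ (φ x) * φ (φ (φ x))) * ((b * T + 1) * (c * b * T + 1) * (c * (c * b) * T + 1)
        * (c * (c * (c * b)) * T + 1)) := by rw [← hT]
      _ = (y * φ y * φ (φ y) * φ (φ (φ y))) * ((b * S + 1) * (c * b * S + 1) * (c * (c * b) * S + 1)
        * (c * (c * (c * b)) * S + 1)) := by linear_combination this
      _ = _ := by rw [← hS]
  have huv : b * T = b * S := by
    rcases hc with hc | hc
    · have hc3 : c * (c * (c * b)) = -(c * b) := by linear_combination c * b * hc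
      have hc2 : c * (c * b) = - b := by linear_combination b * hc
      have aux : ∀ t : F, b * (t * ((b * t + 1) * (c * b * t + 1) * (-b * t + 1)
          * (-(c * b) * t + 1))) = b * t * (1 - (b * t) ^ 4) := by
        intro t
        have : b * (t * ((b * t + 1) * (c * b * t + 1) * (-b * t + 1)
          * (-(c * b) * t + 1))) = b * t * ((1 - (b * t) ^ 2) * (1 - c ^ 2 * (b * t) ^ 2)) := by ring
        rw [this, hc]; ring
      rw [hc3, hc2] at hN
      refine cpp_case_sq h5 φ c _ _ hc ?_ ?_ ?_
      · rw [map_mul, hb, hφT]; ring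
      · rw [map_mul, hb, hφS]; ring
      · rw [← aux, ← aux, hN]
    · subst hc
      refine cpp_case_neg h5 φ _ _ ?_ ?_ ?_
      · rw [map_mul, hb, hφT]; ring
      · rw [map_mul, hb, hφS]; ring
      · linear_combination b * hN
  have hTS := mul_left_cancel₀ hb0 huv
  rw [hTS] at h
  exact mul_right_cancel₀ (cpp_fixed_ne φ b c S hb hc1 hφS) h

theorem cpp_norm {F : Type*} [Field F] [CharP F 5] (φ : F →+* F)
    (hφ : ∀ x, φ (φ (φ (φ x))) = x) (x y : F)
    (h : x * (x * φ x * φ (φ x) * φ (φ (φ x))) = y * (y * φ y * φ (φ y) * φ (φ (φ y)))) :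
    x = y := by
  have : Fact (Nat.Prime 5) := ⟨by norm_num⟩
  have h1 := congrArg φ h
  have h2 := congrArg φ h1
  have h3 := congrArg φ h2
  simp only [map_mul, hφ] at h1 h2 h3
  have hN := congrArg₂ (· * ·) (congrArg₂ (· * ·) (congrArg₂ (· * ·) h h1) h2) h3
  have h5 : (x * φ x * φ (φ x) * φ (φ (φ x))) ^ 5 = (y * φ y * φ (φ y) * φ (φ (φ y))) ^ 5 := by
    linear_combination hN
  have hE : x * φ x * φ (φ x) * φ (φ (φ x)) = y * φ y * φ (φ y) * φ (φ (φ y)) :=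
    frobenius_inj F 5 h5
  rw [hE] at h
  by_cases h0 : y * φ y * φ (φ y) * φ (φ (φ y)) = 0
  · have z : ∀ w : F, w * φ w * φ (φ w) * φ (φ (φ w)) = 0 → w = 0 := by
      intro w hw
      simpa using hw
    rw [z y h0, z x (hE.trans h0)]
  · exact mul_right_cancel₀ h0 h

/-- **Corollary.** Let `k ≥ 1`, `n = 4k`, `d = (5^{4k} - 1)/(5^k - 1) + 1`, and let `F`
be the finite field with `5^n` elements. If `a ∈ F` satisfies `a^(2(5^k - 1)) = -1` or
`a^(5^k - 1) = -1`, then `a⁻¹ x^d` is a complete permutation polynomial over `F`. -/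
theorem stmt_8 (k : ℕ) (hk : 0 < k)
    (n : ℕ) (hn : n = 4 * k) (d : ℕ) (hd : d = (5 ^ (4 * k) - 1) / (5 ^ k - 1) + 1)
    (F : Type*) [Field F] [Fintype F] (hF : Fintype.card F = 5 ^ n)
    (a : F) (ha : a ^ (2 * (5 ^ k - 1)) = -1 ∨ a ^ (5 ^ k - 1) = -1) :
    Function.Bijective (fun x : F => a⁻¹ * x ^ d) ∧
    Function.Bijective (fun x : F => a⁻¹ * x ^ d + x) := by
  have : Fact (Nat.Prime 5) := ⟨by norm_num⟩
  have hn0 : n ≠ 0 := by omega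
  have h5 : (5 : F) = 0 := by
    have h := FiniteField.cast_card_eq_zero F
    rw [hF] at h
    push_cast at h
    exact (pow_eq_zero_iff hn0).1 h
  have : CharP F 5 := ringChar.of_eq (CharP.ringChar_of_prime_eq_zero (by norm_num) (by exact_mod_cast h5))
  have hq : 5 ≤ 5 ^ k := Nat.le_self_pow hk.ne' 5
  obtain ⟨r, hr⟩ : ∃ r, 5 ^ k = r + 1 := ⟨5 ^ k - 1, by omega⟩
  have hr0 : 0 < r := by omega
  have hr1 : 5 ^ k - 1 = r := by omega
  have hd' : d = 1 + (1 + 5 ^ k + 5 ^ k * 5 ^ k + 5 ^ k * 5 ^ k * 5 ^ k) := by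
    rw [hd, hr1, mul_comm 4 k, pow_mul, add_comm]
    congr 1
    apply Nat.div_eq_of_eq_mul_right hr0
    rw [hr]
    have : (r + 1) ^ 4 = r * (1 + (r + 1) + (r + 1) * (r + 1) + (r + 1) * (r + 1) * (r + 1)) + 1 := by
      ring
    rw [this, Nat.add_sub_cancel]
  obtain ⟨φ, hφd⟩ : ∃ φ : F →+* F, ∀ x, φ x = x ^ (5 ^ k) :=
    ⟨iterateFrobenius F 5 k, fun x => iterateFrobenius_def 5 k x⟩
  have hφ : ∀ x, φ (φ (φ (φ x))) = x := by
    intro x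
    simp only [hφd, ← pow_mul]
    have : 5 ^ k * 5 ^ k * 5 ^ k * 5 ^ k = Fintype.card F := by
      rw [hF, hn, mul_comm 4 k, pow_mul]; ring
    rw [this, FiniteField.pow_card]
  have hxd : ∀ x : F, x ^ d = x * (x * φ x * φ (φ x) * φ (φ (φ x))) := by
    intro x
    simp only [hφd, ← pow_mul]
    rw [hd']
    simp only [pow_add, pow_one]
  rw [hr1] at ha
  have hone : (-1 : F) ≠ 0 := neg_ne_zero.2 one_ne_zero
  have ha0 : a ≠ 0 := by
    rintro rfl
    rcases ha with ha | ha
    · rw [zero_pow (by omega)] at ha; exact hone ha.symm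
    · rw [zero_pow (by omega)] at ha; exact hone ha.symm
  have hc : ((a⁻¹) ^ r) ^ 2 = -1 ∨ (a⁻¹) ^ r = -1 := by
    rcases ha with ha | ha
    · left; rw [← pow_mul, mul_comm r 2, inv_pow, ha, inv_neg, inv_one]
    · right; rw [inv_pow, ha, inv_neg, inv_one]
  have hb : φ a⁻¹ = (a⁻¹) ^ r * a⁻¹ := by rw [hφd, hr, pow_succ]
  obtain ⟨c, hcd⟩ : ∃ c, c = (a⁻¹) ^ r := ⟨_, rfl⟩
  rw [← hcd] at hc hb
  have hcc : φ c = c := by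
    rcases hc with hc | hc
    · have h2 : φ 2 = 2 := map_ofNat φ 2
      have : (c - 2) * (c + 2) = 0 := by linear_combination hc - h5
      rcases mul_eq_zero.1 this with hh | hh
      · have : c = 2 := by linear_combination hh
        rw [this, h2]
      · have : c = -2 := by linear_combination hh
        rw [this, map_neg, h2]
    · rw [hc, map_neg, map_one]
  have hb0 : a⁻¹ ≠ 0 := inv_ne_zero ha0
  constructor
  · apply Finite.injective_iff_bijective.1
    intro x y hxy
    have hxy := mul_left_cancel₀ hb0 hxy
    rw [hxd, hxd] at hxy
    exact cpp_norm φ hφ x y hxy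
  · apply Finite.injective_iff_bijective.1
    intro x y hxy
    simp only [hxd] at hxy
    exact cpp_core h5 φ a⁻¹ c hφ hb0 hb hcc hc x y (by linear_combination hxy)
end

section
/- Let k be a positive integer with gcd(k, 6) = 1, n = 6k, and d = (3^{6k} - 1)/(3^k - 1) + 1. Let β ∈ F_{3^n} satisfy β⁶ + β + 2 = 0, and write [x_0, x_1, x_2, x_3, x_4, x_5] for the element x_0 + x_1β + x_2β² + x_3β³ + x_4β⁴ + x_5β⁵ with x_i ∈ F_{3^k}. Then for every u ∈ F_{3^k} with u ≠ 0, the polynomial a^{-1}x^d is a complete permutation polynomial over F_{3^n} for each of the following a: [0,0,u,u,u,u], [0,u,0,0,u,-u], [0,u,0,-u,-u,0], [u,0,u,0,u,u], [u,0,-u,u,0,-u], [u,u,0,-u,u,u], [u,u,u,0,-u,0], [u,u,u,0,-u,-u], [u,u,-u,0,-u,-u], [u,u,-u,u,0,0], [u,-u,u,0,0,-u], [u,-u,-u,-u,u,-u]. -/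
/-- `vec6 β x₀ x₁ x₂ x₃ x₄ x₅ = x₀ + x₁β + x₂β² + x₃β³ + x₄β⁴ + x₅β⁵`,
the element written `[x₀, x₁, x₂, x₃, x₄, x₅]` in the basis `{1, β, …, β⁵}`. -/
def vec6 {F : Type*} [CommRing F] (β x0 x1 x2 x3 x4 x5 : F) : F :=
  x0 + x1 * β + x2 * β ^ 2 + x3 * β ^ 3 + x4 * β ^ 4 + x5 * β ^ 5

/-- The degree seven Dickson polynomial in characteristic three. -/
def D7 {F : Type*} [CommRing F] (b z : F) : F := z ^ 7 - b * z ^ 5 - b ^ 2 * z ^ 3 - b ^ 3 * z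

/-- `α` lies in the field with `3^6` elements, and `z` times the product of
`z + α^(3^i)` is a translate of a Dickson polynomial. -/
def Good {F : Type*} [CommRing F] (α b c : F) : Prop :=
  α ^ (3 ^ 6) = α ∧ IsUnit α ∧
    ∀ z : F, z * ∏ i ∈ Finset.range 6, (z + α ^ (3 ^ i)) = D7 b (z + c) - D7 b c

theorem good_of {F : Type*} [CommRing F] (a0 a1 a2 a3 a4 a5 a' b c : F)
    (h0 : a0 ^ 3 = a1) (h1 : a1 ^ 3 = a2) (h2 : a2 ^ 3 = a3) (h3 : a3 ^ 3 = a4)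
    (h4 : a4 ^ 3 = a5) (h5 : a5 ^ 3 = a0) (hi : a0 * a' = 1)
    (h : ∀ z : F, z * ((z + a0) * (z + a1) * (z + a2) * (z + a3) * (z + a4) * (z + a5)) =
      D7 b (z + c) - D7 b c) : Good a0 b c := by
  have e1 : a0 ^ 3 ^ 1 = a1 := by rw [← h0]; norm_num
  have e2 : a0 ^ 3 ^ 2 = a2 := by rw [← h1, ← e1, ← pow_mul]; norm_num
  have e3 : a0 ^ 3 ^ 3 = a3 := by rw [← h2, ← e2, ← pow_mul]; norm_num
  have e4 : a0 ^ 3 ^ 4 = a4 := by rw [← h3, ← e3, ← pow_mul]; norm_num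
  have e5 : a0 ^ 3 ^ 5 = a5 := by rw [← h4, ← e4, ← pow_mul]; norm_num
  have e6 : a0 ^ 3 ^ 6 = a0 := by
    conv_rhs => rw [← h5, ← e5, ← pow_mul]
    norm_num
  refine ⟨e6, IsUnit.of_mul_eq_one _ hi, fun z => ?_⟩
  rw [← h z]
  simp only [Finset.prod_range_succ, Finset.prod_range_zero, e1, e2, e3, e4, e5]
  simp

theorem goodA {F : Type*} [CommRing F] [CharP F 3] (β : F) (hβ : β ^ 6 + β + 2 = 0) :
    Good (β ^ 2 + β ^ 3 + β ^ 4 + β ^ 5) 0 1 := by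
  have h0 : (β ^ 2 + β ^ 3 + β ^ 4 + β ^ 5) ^ 3 = (-1 + β ^ 2 - β ^ 3 + β ^ 5) := by grind
  have h1 : (-1 + β ^ 2 - β ^ 3 + β ^ 5) ^ 3 = (-β - β ^ 4 + β ^ 5) := by grind
  have h2 : (-β - β ^ 4 + β ^ 5) ^ 3 = (-1 - β - β ^ 2 + β ^ 4 + β ^ 5) := by grind
  have h3 : (-1 - β - β ^ 2 + β ^ 4 + β ^ 5) ^ 3 = (-1 - β + β ^ 2 + β ^ 4 + β ^ 5) := by grind
  have h4 : (-1 - β + β ^ 2 + β ^ 4 + β ^ 5) ^ 3 = (1 + β ^ 2 + β ^ 4 + β ^ 5) := by grind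
  have h5 : (1 + β ^ 2 + β ^ 4 + β ^ 5) ^ 3 = (β ^ 2 + β ^ 3 + β ^ 4 + β ^ 5) := by grind
  have hi : (β ^ 2 + β ^ 3 + β ^ 4 + β ^ 5) * (1 + β ^ 2 + β ^ 3 - β ^ 4) = 1 := by grind
  have p0 : ∀ z : F, (z + (β ^ 2 + β ^ 3 + β ^ 4 + β ^ 5)) * (z + (-1 - β - β ^ 2 + β ^ 4 + β ^ 5)) =
      z ^ 2 + (-1 - β + β ^ 3 - β ^ 4 - β ^ 5) * z + (-1 - β + β ^ 3 - β ^ 4 - β ^ 5) := by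
    intro z; grind
  have p1 : ∀ z : F, (z + (-1 + β ^ 2 - β ^ 3 + β ^ 5)) * (z + (-1 - β + β ^ 2 + β ^ 4 + β ^ 5)) =
      z ^ 2 + (1 - β - β ^ 2 - β ^ 3 + β ^ 4 - β ^ 5) * z + (1 - β - β ^ 2 - β ^ 3 + β ^ 4 - β ^ 5) := by
    intro z; grind
  have p2 : ∀ z : F, (z + (-β - β ^ 4 + β ^ 5)) * (z + (1 + β ^ 2 + β ^ 4 + β ^ 5)) =
      z ^ 2 + (1 - β + β ^ 2 - β ^ 5) * z + (1 - β + β ^ 2 - β ^ 5) := by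
    intro z; grind
  have hp : ∀ z : F, z * ((z ^ 2 + (-1 - β + β ^ 3 - β ^ 4 - β ^ 5) * z + (-1 - β + β ^ 3 - β ^ 4 - β ^ 5)) *
      (z ^ 2 + (1 - β - β ^ 2 - β ^ 3 + β ^ 4 - β ^ 5) * z + (1 - β - β ^ 2 - β ^ 3 + β ^ 4 - β ^ 5)) *
      (z ^ 2 + (1 - β + β ^ 2 - β ^ 5) * z + (1 - β + β ^ 2 - β ^ 5))) =
      D7 0 (z + 1) - D7 0 1 := by
    intro z; unfold D7; grind
  refine good_of _
    (-1 + β ^ 2 - β ^ 3 + β ^ 5)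
    (-β - β ^ 4 + β ^ 5)
    (-1 - β - β ^ 2 + β ^ 4 + β ^ 5)
    (-1 - β + β ^ 2 + β ^ 4 + β ^ 5)
    (1 + β ^ 2 + β ^ 4 + β ^ 5)
    _ _ _ h0 h1 h2 h3 h4 h5 hi (fun z => ?_)
  rw [← hp z, ← p0, ← p1, ← p2]
  ring

theorem goodB {F : Type*} [CommRing F] [CharP F 3] (β : F) (hβ : β ^ 6 + β + 2 = 0) :
    Good (β - β ^ 3 - β ^ 4) (-1) 0 := by
  have h0 : (β - β ^ 3 - β ^ 4) ^ 3 = (-1 - β - β ^ 2 + β ^ 4) := by grind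
  have h1 : (-1 - β - β ^ 2 + β ^ 4) ^ 3 = (-1 - β + β ^ 2 - β ^ 3) := by grind
  have h2 : (-1 - β + β ^ 2 - β ^ 3) ^ 3 = (-β + β ^ 3 + β ^ 4) := by grind
  have h3 : (-β + β ^ 3 + β ^ 4) ^ 3 = (1 + β + β ^ 2 - β ^ 4) := by grind
  have h4 : (1 + β + β ^ 2 - β ^ 4) ^ 3 = (1 + β - β ^ 2 + β ^ 3) := by grind
  have h5 : (1 + β - β ^ 2 + β ^ 3) ^ 3 = (β - β ^ 3 - β ^ 4) := by grind
  have hi : (β - β ^ 3 - β ^ 4) * (1 + β - β ^ 3 + β ^ 4) = 1 := by grind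
  have p0 : ∀ z : F, (z + (β - β ^ 3 - β ^ 4)) * (z + (-β + β ^ 3 + β ^ 4)) =
      z ^ 2 + (0) * z + (-1 - β + β ^ 3 - β ^ 4 - β ^ 5) := by
    intro z; grind
  have p1 : ∀ z : F, (z + (-1 - β - β ^ 2 + β ^ 4)) * (z + (1 + β + β ^ 2 - β ^ 4)) =
      z ^ 2 + (0) * z + (1 - β - β ^ 2 - β ^ 3 + β ^ 4 - β ^ 5) := by
    intro z; grind
  have p2 : ∀ z : F, (z + (-1 - β + β ^ 2 - β ^ 3)) * (z + (1 + β - β ^ 2 + β ^ 3)) =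
      z ^ 2 + (0) * z + (1 - β + β ^ 2 - β ^ 5) := by
    intro z; grind
  have hp : ∀ z : F, z * ((z ^ 2 + (0) * z + (-1 - β + β ^ 3 - β ^ 4 - β ^ 5)) *
      (z ^ 2 + (0) * z + (1 - β - β ^ 2 - β ^ 3 + β ^ 4 - β ^ 5)) *
      (z ^ 2 + (0) * z + (1 - β + β ^ 2 - β ^ 5))) =
      D7 (-1) (z + 0) - D7 (-1) 0 := by
    intro z; unfold D7; grind
  refine good_of _
    (-1 - β - β ^ 2 + β ^ 4)
    (-1 - β + β ^ 2 - β ^ 3)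
    (-β + β ^ 3 + β ^ 4)
    (1 + β + β ^ 2 - β ^ 4)
    (1 + β - β ^ 2 + β ^ 3)
    _ _ _ h0 h1 h2 h3 h4 h5 hi (fun z => ?_)
  rw [← hp z, ← p0, ← p1, ← p2]
  ring

theorem goodC {F : Type*} [CommRing F] [CharP F 3] (β : F) (hβ : β ^ 6 + β + 2 = 0) :
    Good (1 + β - β ^ 3 + β ^ 4 + β ^ 5) 1 1 := by
  have h0 : (1 + β - β ^ 3 + β ^ 4 + β ^ 5) ^ 3 = (-1 + β + β ^ 2 + β ^ 3 - β ^ 4 + β ^ 5) := by grind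
  have h1 : (-1 + β + β ^ 2 + β ^ 3 - β ^ 4 + β ^ 5) ^ 3 = (-1 + β - β ^ 2 + β ^ 5) := by grind
  have h2 : (-1 + β - β ^ 2 + β ^ 5) ^ 3 = (1 + β - β ^ 3 + β ^ 4 + β ^ 5) := by grind
  have h3 : (1 + β - β ^ 3 + β ^ 4 + β ^ 5) ^ 3 = (-1 + β + β ^ 2 + β ^ 3 - β ^ 4 + β ^ 5) := by grind
  have h4 : (-1 + β + β ^ 2 + β ^ 3 - β ^ 4 + β ^ 5) ^ 3 = (-1 + β - β ^ 2 + β ^ 5) := by grind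
  have h5 : (-1 + β - β ^ 2 + β ^ 5) ^ 3 = (1 + β - β ^ 3 + β ^ 4 + β ^ 5) := by grind
  have hi : (1 + β - β ^ 3 + β ^ 4 + β ^ 5) * (-1 - β + β ^ 2 - β ^ 5) = 1 := by grind
  have p0 : ∀ z : F, (z + (1 + β - β ^ 3 + β ^ 4 + β ^ 5)) * (z + (1 + β - β ^ 3 + β ^ 4 + β ^ 5)) =
      z ^ 2 + (-1 - β + β ^ 3 - β ^ 4 - β ^ 5) * z + (1 - β ^ 2 + β ^ 3 - β ^ 4) := by
    intro z; grind
  have p1 : ∀ z : F, (z + (-1 + β + β ^ 2 + β ^ 3 - β ^ 4 + β ^ 5)) * (z + (-1 + β + β ^ 2 + β ^ 3 - β ^ 4 + β ^ 5)) =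
      z ^ 2 + (1 - β - β ^ 2 - β ^ 3 + β ^ 4 - β ^ 5) * z + (-1 - β ^ 2 + β ^ 3 - β ^ 4) := by
    intro z; grind
  have p2 : ∀ z : F, (z + (-1 + β - β ^ 2 + β ^ 5)) * (z + (-1 + β - β ^ 2 + β ^ 5)) =
      z ^ 2 + (1 - β + β ^ 2 - β ^ 5) * z + (-β ^ 2 + β ^ 3 - β ^ 4) := by
    intro z; grind
  have hp : ∀ z : F, z * ((z ^ 2 + (-1 - β + β ^ 3 - β ^ 4 - β ^ 5) * z + (1 - β ^ 2 + β ^ 3 - β ^ 4)) *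
      (z ^ 2 + (1 - β - β ^ 2 - β ^ 3 + β ^ 4 - β ^ 5) * z + (-1 - β ^ 2 + β ^ 3 - β ^ 4)) *
      (z ^ 2 + (1 - β + β ^ 2 - β ^ 5) * z + (-β ^ 2 + β ^ 3 - β ^ 4))) =
      D7 1 (z + 1) - D7 1 1 := by
    intro z; unfold D7; grind
  refine good_of _
    (-1 + β + β ^ 2 + β ^ 3 - β ^ 4 + β ^ 5)
    (-1 + β - β ^ 2 + β ^ 5)
    (1 + β - β ^ 3 + β ^ 4 + β ^ 5)
    (-1 + β + β ^ 2 + β ^ 3 - β ^ 4 + β ^ 5)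
    (-1 + β - β ^ 2 + β ^ 5)
    _ _ _ h0 h1 h2 h3 h4 h5 hi (fun z => ?_)
  rw [← hp z, ← p0, ← p1, ← p2]
  ring

theorem pow_seven_inj {F : Type*} [Field F] (Q : ℕ) (hQ : Nat.Coprime 7 (Q - 1)) (hQ0 : 0 < Q)
    (s t : F) (hs : s ^ Q = s) (ht : t ^ Q = t) (h : s ^ 7 = t ^ 7) : s = t := by
  by_cases ht0 : t = 0
  · subst ht0
    simpa using h
  have h1 : (s / t) ^ 7 = 1 := by
    rw [div_pow, h, div_self (pow_ne_zero _ ht0)]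
  have hs0 : s ≠ 0 := by
    rintro rfl
    exact ht0 (by simpa using h.symm)
  have hr0 : s / t ≠ 0 := div_ne_zero hs0 ht0
  have h2 : (s / t) ^ (Q - 1) = 1 := by
    apply mul_right_cancel₀ hr0
    rw [← pow_succ, Nat.sub_add_cancel hQ0, div_pow, hs, ht, one_mul]
  have h3 : orderOf (s / t) ∣ 1 := by
    rw [← hQ.gcd_eq_one]
    exact Nat.dvd_gcd (orderOf_dvd_of_pow_eq_one h1) (orderOf_dvd_of_pow_eq_one h2)
  have h4 := orderOf_eq_one_iff.mp (Nat.dvd_one.mp h3)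
  rwa [div_eq_one_iff_eq ht0] at h4

theorem coprime_seven (k : ℕ) (hk6 : Nat.gcd k 6 = 1) :
    Nat.Coprime 7 ((3 ^ k) ^ 2 - 1) := by
  rw [(by norm_num : Nat.Prime 7).coprime_iff_not_dvd, ← pow_mul, mul_comm k 2, pow_mul]
  intro hd
  have hk : k % 6 = 1 ∨ k % 6 = 5 := by
    have h2 : ¬ 2 ∣ k := fun h => by
      have := Nat.dvd_gcd h (by norm_num : 2 ∣ 6)
      omega
    have h3 : ¬ 3 ∣ k := fun h => by
      have := Nat.dvd_gcd h (by norm_num : 3 ∣ 6)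
      omega
    omega
  have h1 : (3 ^ 2) ^ k % 7 = 1 := by
    have : 1 ≤ (3 ^ 2) ^ k := Nat.one_le_pow _ _ (by norm_num)
    omega
  have h2 : (3 ^ 2) ^ k % 7 = (3 ^ 2) ^ (k % 6) % 7 := by
    conv_lhs => rw [← Nat.div_add_mod k 6, pow_add, pow_mul, Nat.mul_mod, Nat.pow_mod]
    norm_num
  rcases hk with hk | hk <;> rw [h2, hk] at h1 <;> norm_num at h1

theorem fix_add {F : Type*} [Field F] [CharP F 3] (m : ℕ) (x y : F) :
    (x + y) ^ (3 ^ m) = x ^ (3 ^ m) + y ^ (3 ^ m) := by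
  have : Fact (Nat.Prime 3) := ⟨by norm_num⟩
  exact add_pow_char_pow x y 3 m

theorem fix_neg {F : Type*} [Field F] (m : ℕ) (x : F) :
    (-x) ^ (3 ^ m) = -x ^ (3 ^ m) := by
  rw [Odd.neg_pow]
  exact Odd.pow (by decide)

theorem exists_split {F : Type*} [Field F] [Fintype F] [CharP F 3] (k : ℕ)
    (hF : Fintype.card F = 3 ^ (6 * k)) (x b : F)
    (hx : x ^ (3 ^ k) = x) (hb : b ^ (3 ^ k) = b) :
    ∃ t s : F, t + s = x ∧ t * s = b ∧ t ^ ((3 ^ k) ^ 2) = t ∧ s ^ ((3 ^ k) ^ 2) = s := by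
  have hw : (x ^ 2 - b) ^ (3 ^ k) = x ^ 2 - b := by
    rw [sub_eq_add_neg, fix_add, fix_neg, hb, ← pow_mul, mul_comm, pow_mul, hx]
  have hsq : IsSquare (x ^ 2 - b) := by
    by_cases h0 : x ^ 2 - b = 0
    · rw [h0]; exact IsSquare.zero
    have h2 : ringChar F ≠ 2 := by
      rw [ringChar.eq F 3]; norm_num
    rw [FiniteField.isSquare_iff h2 h0, hF]
    obtain ⟨m, hm⟩ : Odd (3 ^ k) := Odd.pow (by decide)
    have hw1 : (x ^ 2 - b) ^ (2 * m) = 1 := by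
      apply mul_right_cancel₀ h0
      rw [← pow_succ, ← hm, hw, one_mul]
    have e : 3 ^ (6 * k) / 2 = (2 * m) * ((m + 1) * ((3 ^ k) ^ 4 + (3 ^ k) ^ 2 + 1)) := by
      have : 3 ^ (6 * k) = 2 * ((2 * m) * ((m + 1) * ((3 ^ k) ^ 4 + (3 ^ k) ^ 2 + 1))) + 1 := by
        rw [mul_comm, pow_mul, hm]; ring
      omega
    rw [e, pow_mul, hw1, one_pow]
  obtain ⟨r, hr⟩ := hsq
  have hr2 : r ^ ((3 ^ k) ^ 2) = r := by
    have h1 : (r ^ (3 ^ k)) ^ 2 = r ^ 2 := by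
      rw [← pow_mul, mul_comm, pow_mul, pow_two r, ← hr, hw]
    rw [pow_two, pow_mul]
    rcases sq_eq_sq_iff_eq_or_eq_neg.mp h1 with h | h
    · rw [h, h]
    · rw [h, fix_neg, h, neg_neg]
  have hx2 : x ^ ((3 ^ k) ^ 2) = x := by rw [pow_two, pow_mul, hx, hx]
  have h3 : (3 : F) = 0 := by exact_mod_cast CharP.cast_eq_zero F 3
  have e2 : (3 ^ k) ^ 2 = 3 ^ (k * 2) := by rw [pow_mul]
  refine ⟨-(x + r), -(x + -r), ?_, ?_, ?_, ?_⟩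
  · linear_combination (-x) * h3
  · linear_combination hr
  · rw [e2] at hx2 hr2 ⊢
    rw [fix_neg, fix_add, hx2, hr2]
  · rw [e2] at hx2 hr2 ⊢
    rw [fix_neg, fix_add, fix_neg, hx2, hr2]

theorem D7_split {F : Type*} [Field F] [CharP F 3] (s t : F) :
    D7 (s * t) (s + t) = s ^ 7 + t ^ 7 := by
  have h3 : (3 : F) = 0 := by exact_mod_cast CharP.cast_eq_zero F 3
  unfold D7
  grind

theorem D7_inj {F : Type*} [Field F] [Fintype F] [CharP F 3] (k : ℕ) (hk6 : Nat.gcd k 6 = 1)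
    (hF : Fintype.card F = 3 ^ (6 * k)) (x y b : F)
    (hx : x ^ (3 ^ k) = x) (hy : y ^ (3 ^ k) = y) (hb : b ^ (3 ^ k) = b)
    (h : D7 b x = D7 b y) : x = y := by
  obtain ⟨t, s, h1, h2, ht, hs⟩ := exists_split k hF x b hx hb
  obtain ⟨t', s', h1', h2', ht', hs'⟩ := exists_split k hF y b hy hb
  have e : t ^ 7 + s ^ 7 = t' ^ 7 + s' ^ 7 := by
    rw [← D7_split, ← D7_split, h1, h2, h1', h2', h]
  have hc := coprime_seven k hk6
  have hq : 0 < (3 ^ k) ^ 2 := by positivity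
  have e2 : t ^ 7 * s ^ 7 = t' ^ 7 * s' ^ 7 := by
    rw [← mul_pow, ← mul_pow, h2, h2']
  have e3 : (t ^ 7 - t' ^ 7) * (t ^ 7 - s' ^ 7) = 0 := by
    linear_combination t ^ 7 * e - e2
  rcases mul_eq_zero.mp e3 with h0 | h0
  · have h3 := sub_eq_zero.mp h0
    have h4 : s ^ 7 = s' ^ 7 := by linear_combination e - h3
    rw [← h1, ← h1', pow_seven_inj _ hc hq _ _ ht ht' h3, pow_seven_inj _ hc hq _ _ hs hs' h4]
  · have h3 := sub_eq_zero.mp h0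
    have h4 : s ^ 7 = t' ^ 7 := by linear_combination e - h3
    rw [← h1, ← h1', pow_seven_inj _ hc hq _ _ ht hs' h3, pow_seven_inj _ hc hq _ _ hs ht' h4,
      add_comm]

theorem prod_reindex {F : Type*} [Field F] (k : ℕ) (hk6 : Nat.gcd k 6 = 1) (α z : F)
    (hα : α ^ (3 ^ 6) = α) :
    ∏ i ∈ Finset.range 6, (z + α ^ ((3 ^ k) ^ i)) = ∏ i ∈ Finset.range 6, (z + α ^ (3 ^ i)) := by
  have hp : ∀ m, α ^ (3 ^ (6 * m)) = α := by
    intro m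
    induction m with
    | zero => simp
    | succ m ih => rw [Nat.mul_succ, pow_add, pow_mul, ih, hα]
  have hr : ∀ j, α ^ (3 ^ j) = α ^ (3 ^ (j % 6)) := by
    intro j
    conv_lhs => rw [← Nat.div_add_mod j 6, pow_add, pow_mul, hp]
  have hk : k % 6 = 1 ∨ k % 6 = 5 := by
    have h2 : ¬ 2 ∣ k := fun h => by
      have := Nat.dvd_gcd h (by norm_num : 2 ∣ 6)
      omega
    have h3 : ¬ 3 ∣ k := fun h => by
      have := Nat.dvd_gcd h (by norm_num : 3 ∣ 6)
      omega
    omega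
  have hi : ∀ i, α ^ ((3 ^ k) ^ i) = α ^ (3 ^ ((k % 6) * i % 6)) := by
    intro i
    rw [← pow_mul, hr, Nat.mod_mul_mod]
  simp only [hi]
  rcases hk with hk | hk <;> rw [hk] <;>
    simp only [Finset.prod_range_succ, Finset.prod_range_zero] <;> norm_num
  ring

theorem cpp_main (k : ℕ) (hk : 0 < k) (hk6 : Nat.gcd k 6 = 1)
    (F : Type*) [Field F] [Fintype F] [CharP F 3] (hF : Fintype.card F = 3 ^ (6 * k))
    (u α b c : F) (hu : u ^ (3 ^ k) = u) (hu0 : u ≠ 0)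
    (hb : b ^ (3 ^ k) = b) (hc : c ^ (3 ^ k) = c) (hg : Good α b c) (a : F) (ha : a = u * α) :
    Function.Bijective (fun x : F => a⁻¹ * x ^ ((3 ^ (6 * k) - 1) / (3 ^ k - 1) + 1)) ∧
    Function.Bijective (fun x : F => a⁻¹ * x ^ ((3 ^ (6 * k) - 1) / (3 ^ k - 1) + 1) + x) := by
  obtain ⟨hα, hαu, hP⟩ := hg
  have ha0 : a ≠ 0 := by
    rw [ha]; exact mul_ne_zero hu0 hαu.ne_zero
  set M := (3 ^ (6 * k) - 1) / (3 ^ k - 1) with hM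
  have hq1 : 1 < 3 ^ k := Nat.one_lt_pow hk.ne' (by norm_num)
  have hMs : M = ∑ i ∈ Finset.range 6, (3 ^ k) ^ i := by
    rw [Nat.geomSum_eq hq1, hM, mul_comm 6 k, pow_mul]
  have hN : ∀ x : F, x ^ M = ∏ i ∈ Finset.range 6, x ^ ((3 ^ k) ^ i) := by
    intro x; rw [hMs, Finset.prod_pow_eq_pow_sum]
  have hcard : ∀ x : F, x ^ (3 ^ k) ^ 6 = x := by
    intro x
    rw [← pow_mul, mul_comm k 6, ← hF]; exact FiniteField.pow_card x
  have hNq : ∀ x : F, (x ^ M) ^ (3 ^ k) = x ^ M := by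
    intro x
    have hs : ∀ i ∈ Finset.range 6, (x ^ (3 ^ k) ^ i) ^ 3 ^ k = x ^ (3 ^ k) ^ (i + 1) := by
      intro i _
      rw [← pow_mul, ← pow_succ]
    rw [hN, ← Finset.prod_pow, Finset.prod_congr rfl hs, Finset.prod_range_succ,
      Finset.prod_range_succ' _ 5, hcard, pow_zero, pow_one]
  have hit : ∀ y : F, y ^ (3 ^ k) = y → ∀ i, y ^ ((3 ^ k) ^ i) = y := by
    intro y hy i
    induction i with
    | zero => simp
    | succ i ih => rw [pow_succ, pow_mul, ih, hy]
  have hNf : ∀ y : F, y ^ (3 ^ k) = y → y ^ M = y ^ 6 := by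
    intro y hy
    rw [hN, Finset.prod_congr rfl (fun i _ => hit y hy i)]
    simp
  have hM0 : M ≠ 0 := by
    rw [hMs, Finset.sum_range_succ]; positivity
  have hcop := coprime_seven k hk6
  have hq0 : 0 < (3 ^ k) ^ 2 := by positivity
  constructor
  · rw [← Finite.injective_iff_bijective]
    intro x x' h
    have h1 : x ^ (M + 1) = x' ^ (M + 1) := mul_left_cancel₀ (inv_ne_zero ha0) h
    have h2 : (x ^ M) ^ 7 = (x' ^ M) ^ 7 := by
      have := congrArg (· ^ M) h1
      simp only [pow_succ _ M, mul_pow, hNf _ (hNq _)] at this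
      rw [pow_succ _ 6, pow_succ _ 6, this]
    have h3 : x ^ M = x' ^ M :=
      pow_seven_inj _ hcop hq0 _ _ (hit _ (hNq x) 2) (hit _ (hNq x') 2) h2
    rw [pow_succ, pow_succ, h3] at h1
    by_cases h0 : x' ^ M = 0
    · rw [pow_eq_zero_iff hM0] at h0
      rw [h0, zero_pow hM0, pow_eq_zero_iff hM0] at h3
      rw [h0, h3]
    · exact mul_left_cancel₀ h0 h1
  · have hinj : ∀ y y' : F, y ^ (3 ^ k) = y → y' ^ (3 ^ k) = y' →
        y * (y + a) ^ M = y' * (y' + a) ^ M → y = y' := by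
      have hform : ∀ y : F, y ^ (3 ^ k) = y →
          y * (y + a) ^ M = u ^ 7 * (D7 b (y / u + c) - D7 b c) := by
        intro y hy
        rw [← hP, ← prod_reindex k hk6 α _ hα, hN]
        have : ∀ i ∈ Finset.range 6, (y + a) ^ (3 ^ k) ^ i = u * (y / u + α ^ (3 ^ k) ^ i) := by
          intro i _
          have e : (3 ^ k) ^ i = 3 ^ (k * i) := by rw [pow_mul]
          have h1 := hit y hy i
          have h2 := hit u hu i
          rw [e] at h1 h2 ⊢
          rw [fix_add, ha, mul_pow, h1, h2]
          field_simp
        rw [Finset.prod_congr rfl this, Finset.prod_mul_distrib]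
        simp only [Finset.prod_const, Finset.card_range]
        field_simp
      intro y y' hy hy' h
      rw [hform y hy, hform y' hy'] at h
      have h1 := sub_left_injective (mul_left_cancel₀ (pow_ne_zero 7 hu0) h)
      have hf : ∀ y : F, y ^ (3 ^ k) = y → (y / u + c) ^ (3 ^ k) = y / u + c := by
        intro y hy
        rw [fix_add, div_pow, hy, hu, hc]
      have h2 := D7_inj k hk6 hF _ _ b (hf y hy) (hf y' hy') hb h1
      have h3 := add_right_cancel h2
      field_simp at h3
      exact h3
    rw [← Finite.injective_iff_bijective]
    intro x x' h
    have h1 : x * (x ^ M + a) = x' * (x' ^ M + a) := by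
      have h : a⁻¹ * x ^ (M + 1) + x = a⁻¹ * x' ^ (M + 1) + x' := h
      rw [pow_succ, pow_succ] at h
      field_simp at h
      linear_combination h
    have h2 : x ^ M = x' ^ M := by
      apply hinj _ _ (hNq x) (hNq x')
      rw [← mul_pow, ← mul_pow, h1]
    rw [h2] at h1
    refine mul_right_cancel₀ ?_ h1
    intro h0
    have h3 : x' ^ M = 0 := by
      apply hinj _ _ (hNq x') (by simp)
      rw [h0, zero_pow hM0]; simp
    rw [h3, zero_add] at h0
    exact ha0 h0

/-- **Corollary (p = 3, r = 6).** Let `k ≥ 1` with `gcd(k, 6) = 1`, `n = 6k`,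
`d = (3^{6k} - 1)/(3^k - 1) + 1`, and let `F` be the finite field with `3^n` elements.
Let `β ∈ F` satisfy `β⁶ + β + 2 = 0`, and let `u ∈ F_{3^k}` (fixed by `x ↦ x^{3^k}`),
`u ≠ 0`. Then `a⁻¹ x^d` is a complete permutation polynomial over `F` for each of the
twelve listed values of `a`. -/
theorem stmt_9 (k : ℕ) (hk : 0 < k) (hk6 : Nat.gcd k 6 = 1)
    (n : ℕ) (hn : n = 6 * k) (d : ℕ) (hd : d = (3 ^ (6 * k) - 1) / (3 ^ k - 1) + 1)
    (F : Type*) [Field F] [Fintype F] (hF : Fintype.card F = 3 ^ n)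
    (β : F) (hβ : β ^ 6 + β + 2 = 0)
    (u : F) (hu : u ^ (3 ^ k) = u) (hu0 : u ≠ 0) :
    ∀ a : F,
      a ∈ ([vec6 β 0 0 u u u u,
            vec6 β 0 u 0 0 u (-u),
            vec6 β 0 u 0 (-u) (-u) 0,
            vec6 β u 0 u 0 u u,
            vec6 β u 0 (-u) u 0 (-u),
            vec6 β u u 0 (-u) u u,
            vec6 β u u u 0 (-u) 0,
            vec6 β u u u 0 (-u) (-u),
            vec6 β u u (-u) 0 (-u) (-u),
            vec6 β u u (-u) u 0 0,
            vec6 β u (-u) u 0 0 (-u),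
            vec6 β u (-u) (-u) (-u) u (-u)] : List F) →
      Function.Bijective (fun x : F => a⁻¹ * x ^ d) ∧
      Function.Bijective (fun x : F => a⁻¹ * x ^ d + x) := by
  subst hn hd
  have hp : Fact (Nat.Prime 3) := ⟨by norm_num⟩
  have hch : CharP F 3 := charP_of_card_eq_prime_pow hF
  have h0 : (0 : F) ^ (3 ^ k) = 0 := zero_pow (by positivity)
  have h1 : (1 : F) ^ (3 ^ k) = 1 := one_pow _
  have hm1 : (-1 : F) ^ (3 ^ k) = -1 := by rw [fix_neg, h1]
  have hnu : (-u) ^ (3 ^ k) = -u := by rw [fix_neg, hu]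
  have hb1 : (β ^ 3) ^ 6 + (β ^ 3) + 2 = 0 := by
    clear hF; grind
  have hb2 : (β ^ 3 - β ^ 4) ^ 6 + (β ^ 3 - β ^ 4) + 2 = 0 := by
    clear hF; grind
  have hb3 : (-1 - β - β ^ 2 + β ^ 3 - β ^ 4) ^ 6 + (-1 - β - β ^ 2 + β ^ 3 - β ^ 4) + 2 = 0 := by
    clear hF; grind
  have hb4 : (-β ^ 2 - β ^ 4) ^ 6 + (-β ^ 2 - β ^ 4) + 2 = 0 := by
    clear hF; grind
  have hb5 : (1 - β ^ 2) ^ 6 + (1 - β ^ 2) + 2 = 0 := by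
    clear hF; grind
  intro a ha
  simp only [List.mem_cons, List.not_mem_nil, or_false] at ha
  rcases ha with rfl | rfl | rfl | rfl | rfl | rfl | rfl | rfl | rfl | rfl | rfl | rfl
  · refine cpp_main k hk hk6 F hF u _ _ _ hu hu0 h0 h1 (goodA β hβ)
      _ ?_
    clear hF; unfold vec6; grind
  · refine cpp_main k hk hk6 F hF (-u) _ _ _ hnu (neg_ne_zero.mpr hu0) h0 h1 (goodA (β ^ 3 - β ^ 4) hb2)
      _ ?_
    clear hF; unfold vec6; grind
  · refine cpp_main k hk hk6 F hF u _ _ _ hu hu0 hm1 h0 (goodB β hβ)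
      _ ?_
    clear hF; unfold vec6; grind
  · refine cpp_main k hk hk6 F hF u _ _ _ hu hu0 h0 h1 (goodA (1 - β ^ 2) hb5)
      _ ?_
    clear hF; unfold vec6; grind
  · refine cpp_main k hk hk6 F hF (-u) _ _ _ hnu (neg_ne_zero.mpr hu0) h0 h1 (goodA (β ^ 3) hb1)
      _ ?_
    clear hF; unfold vec6; grind
  · refine cpp_main k hk hk6 F hF u _ _ _ hu hu0 h1 h1 (goodC β hβ)
      _ ?_
    clear hF; unfold vec6; grind
  · refine cpp_main k hk hk6 F hF (-u) _ _ _ hnu (neg_ne_zero.mpr hu0) hm1 h0 (goodB (β ^ 3) hb1)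
      _ ?_
    clear hF; unfold vec6; grind
  · refine cpp_main k hk hk6 F hF (-u) _ _ _ hnu (neg_ne_zero.mpr hu0) h0 h1 (goodA (-1 - β - β ^ 2 + β ^ 3 - β ^ 4) hb3)
      _ ?_
    clear hF; unfold vec6; grind
  · refine cpp_main k hk hk6 F hF (-u) _ _ _ hnu (neg_ne_zero.mpr hu0) h0 h1 (goodA (-β ^ 2 - β ^ 4) hb4)
      _ ?_
    clear hF; unfold vec6; grind
  · refine cpp_main k hk hk6 F hF (-u) _ _ _ hnu (neg_ne_zero.mpr hu0) hm1 h0 (goodB (β ^ 3 - β ^ 4) hb2)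
      _ ?_
    clear hF; unfold vec6; grind
  · refine cpp_main k hk hk6 F hF (-u) _ _ _ hnu (neg_ne_zero.mpr hu0) h1 h1 (goodC (β ^ 3 - β ^ 4) hb2)
      _ ?_
    clear hF; unfold vec6; grind
  · refine cpp_main k hk hk6 F hF (-u) _ _ _ hnu (neg_ne_zero.mpr hu0) h1 h1 (goodC (β ^ 3) hb1)
      _ ?_
    clear hF; unfold vec6; grind
end

section
/- Let p be an odd prime, r = p - 1, and let t be a positive integer with gcd(rt + 1, p - 1) = 1. Set d = t·(p^r - 1)/(p - 1) + 1. Then for every a ∈ F_{p^r} with a^{p-1} = -1, the polynomial a^{-1}x^d is a complete permutation polynomial over F_{p^r}; that is, both x ↦ a^{-1}x^d and x ↦ a^{-1}x^d + x are bijections of F_{p^r}. -/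
/-- **Theorem.** Let `p` be an odd prime, `r = p - 1`, and `t ≥ 1` with
`gcd(rt + 1, p - 1) = 1`. Set `d = t·(p^r - 1)/(p - 1) + 1` and let `F` be the finite
field with `p^r` elements. Then for every `a ∈ F` with `a^{p-1} = -1`, the monomial
`a⁻¹ x^d` is a complete permutation polynomial over `F`. -/
theorem stmt_12 (p : ℕ) (hp : p.Prime) (hodd : Odd p)
    (r : ℕ) (hr : r = p - 1) (t : ℕ) (ht : 0 < t)
    (hgcd : Nat.gcd (r * t + 1) (p - 1) = 1)
    (d : ℕ) (hd : d = t * ((p ^ r - 1) / (p - 1)) + 1)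
    (F : Type*) [Field F] [Fintype F] (hF : Fintype.card F = p ^ r)
    (a : F) (ha : a ^ (p - 1) = -1) :
    Function.Bijective (fun x : F => a⁻¹ * x ^ d) ∧
    Function.Bijective (fun x : F => a⁻¹ * x ^ d + x) := by
  have hp2 : 2 ≤ p := hp.two_le
  obtain ⟨k, hk⟩ := hodd
  have hk1 : p - 1 = 2 * k := by omega
  have hk0 : 0 < k := by omega
  have : Fact p.Prime := ⟨hp⟩
  have : CharP F p := charP_of_card_eq_prime_pow hF
  obtain ⟨M, hM⟩ : ∃ M, M = ∑ i ∈ Finset.range k, (p ^ 2) ^ i := ⟨_, rfl⟩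
  obtain ⟨N, hN⟩ : ∃ N, N = M * (p + 1) := ⟨_, rfl⟩
  have hMg : M * (p ^ 2 - 1) + 1 = p ^ r := by
    have h := Nat.geomSum_eq (m := p ^ 2) (by nlinarith) k
    have hdvd : (p ^ 2 - 1) ∣ ((p ^ 2) ^ k - 1) := by
      simpa using Nat.sub_dvd_pow_sub_pow (p ^ 2) 1 k
    rw [hM, h, Nat.div_mul_cancel hdvd, ← pow_mul, ← hk1, ← hr]
    exact Nat.sub_add_cancel (Nat.one_le_pow _ _ (by omega))
  have hsq : p ^ 2 - 1 = (p + 1) * (p - 1) := by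
    simpa using Nat.sq_sub_sq p 1
  have hNg : N * (p - 1) + 1 = p ^ r := by
    rw [← hMg, hsq, hN]; ring
  have hNd : (p ^ r - 1) / (p - 1) = N := by
    rw [← hNg, Nat.add_sub_cancel]
    exact Nat.mul_div_cancel _ (by omega)
  rw [hNd] at hd
  have hMd : (p - 1) ∣ 2 * M := by
    have h1 : M ≡ k [MOD (p - 1)] := by
      rw [hM]
      have hpm : p ≡ 1 [MOD (p - 1)] := ((Nat.modEq_iff_dvd' (by omega)).2 dvd_rfl).symm
      have : ∀ n, ∑ i ∈ Finset.range n, (p ^ 2) ^ i ≡ n [MOD (p - 1)] := by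
        intro n
        induction n with
        | zero => rfl
        | succ n ih =>
          rw [Finset.sum_range_succ]
          refine ih.add ?_
          simpa using (hpm.pow 2).pow n
      exact this k
    have h2 := h1.mul_left 2
    rw [← hk1] at h2
    exact (Nat.modEq_zero_iff_dvd).1 (h2.trans (by simp [Nat.ModEq]))
  have hNdvd : (p - 1) ∣ N := by
    have : N = 2 * M * (k + 1) := by rw [hN, hk]; ring
    rw [this]; exact Dvd.dvd.mul_right hMd _
  have hN0 : 0 < N := by
    rcases Nat.eq_zero_or_pos N with h | h
    · rw [h] at hNg
      have : 1 < p ^ r := Nat.one_lt_pow (by omega) (by omega)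
      omega
    · exact h
  have hone : ∀ x : F, x ≠ 0 → (x ^ N) ^ (p - 1) = 1 := by
    intro x hx
    rw [← pow_mul]
    have : N * (p - 1) = Fintype.card F - 1 := by rw [hF]; omega
    rw [this]; exact FiniteField.pow_card_sub_one_eq_one x hx
  have hpp : p = (p - 1) + 1 := by omega
  have hfix : ∀ x : F, (x ^ N) ^ p = x ^ N := by
    intro x
    by_cases hx : x = 0
    · simp [hx, hN0.ne', hp.ne_zero]
    · conv_lhs => rw [hpp]
      rw [pow_succ, hone x hx, one_mul]
  have ha0 : a ≠ 0 := by
    rintro rfl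
    rw [zero_pow (by omega)] at ha
    have : (-1 : F) ≠ 0 := by simp
    exact this ha.symm
  have hap : a ^ p = -a := by
    conv_lhs => rw [hpp]
    rw [pow_succ, ha]; ring
  have h2 : (2 : F) ≠ 0 := by
    intro h
    have : ((2 : ℕ) : F) = 0 := by exact_mod_cast h
    rw [CharP.cast_eq_zero_iff F p] at this
    have := Nat.le_of_dvd (by norm_num) this
    omega
  have hxd : ∀ x : F, x ^ d = (x ^ N) ^ t * x := by
    intro x; rw [hd, pow_succ, mul_comm t N, pow_mul]
  constructor
  · refine Finite.injective_iff_bijective.1 ?_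
    intro x y hxy
    have hxy : x ^ d = y ^ d := mul_left_cancel₀ (inv_ne_zero ha0) hxy
    have hd0 : d ≠ 0 := by omega
    by_cases hx : x = 0
    · rw [hx, zero_pow hd0] at hxy
      rw [hx, pow_eq_zero_iff hd0 |>.1 hxy.symm]
    have hy : y ≠ 0 := by
      rintro rfl
      rw [zero_pow hd0] at hxy
      exact hx (pow_eq_zero_iff hd0 |>.1 hxy)
    have key : ∀ z : F, z ≠ 0 → (z ^ d) ^ N = z ^ N := by
      intro z hz
      obtain ⟨m, hm⟩ := hNdvd
      have h1 : (z ^ N) ^ N = 1 := by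
        conv_lhs => rw [hm, pow_mul (z ^ _), ← hm, hone z hz, one_pow]
      rw [hxd, mul_pow, ← pow_mul, mul_comm t N, pow_mul, h1, one_pow, one_mul]
    have hN' : x ^ N = y ^ N := by rw [← key x hx, ← key y hy, hxy]
    rw [hxd, hxd, hN'] at hxy
    exact mul_left_cancel₀ (pow_ne_zero _ (pow_ne_zero _ hy)) hxy
  · refine Finite.injective_iff_bijective.1 ?_
    obtain ⟨w, hw⟩ : ∃ w : F → F, ∀ x, w x = 1 + a⁻¹ * (x ^ N) ^ t := ⟨_, fun _ => rfl⟩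
    have hwp : ∀ x, w x ^ p = 1 - a⁻¹ * (x ^ N) ^ t := by
      intro x
      rw [hw, add_pow_char, one_pow, mul_pow, inv_pow, hap, ← pow_mul _ t p, mul_comm t p,
        pow_mul _ p t, hfix, inv_neg]
      ring
    have hs : ∀ x, w x ^ (p + 1) = 1 - (a⁻¹) ^ 2 * ((x ^ N) ^ 2) ^ t := by
      intro x; rw [pow_succ, hwp, hw]; ring
    have hw0 : ∀ x, w x ≠ 0 := by
      intro x h
      have h1 := hwp x
      rw [h, zero_pow hp.ne_zero] at h1
      have h3 := hw x
      rw [h] at h3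
      apply h2
      linear_combination - h1 - h3
    have hsp : ∀ x, (w x ^ (p + 1)) ^ (p - 1) = 1 := by
      intro x
      have hpsq : (w x ^ p) ^ p = w x := by
        rw [hwp, sub_pow_char, one_pow, mul_pow, inv_pow, hap, ← pow_mul _ t p, mul_comm t p,
          pow_mul _ p t, hfix, inv_neg, hw]
        ring
      have : w x * (w x ^ (p + 1)) ^ (p - 1) = w x * 1 := by
        rw [mul_one, ← pow_mul, ← hsq, ← pow_succ', ← Nat.sub_add_comm (by nlinarith), 
          Nat.add_sub_cancel, sq, pow_mul, hpsq]
      exact mul_left_cancel₀ (hw0 x) this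
    have hw2N : ∀ x, (w x ^ N) ^ 2 = 1 := by
      intro x
      obtain ⟨m, hm⟩ := hMd
      rw [← pow_mul, hN, show M * (p + 1) * 2 = (p + 1) * (2 * M) by ring, hm, pow_mul, pow_mul,
        hsp, one_pow]
    intro x y hxy
    have hf : ∀ z : F, a⁻¹ * z ^ d + z = z * w z := by
      intro z; rw [hxd, hw]; ring
    have hxy : x * w x = y * w y := by rw [← hf, ← hf]; exact hxy
    have e1 : x ^ N * w x ^ N = y ^ N * w y ^ N := by rw [← mul_pow, ← mul_pow, hxy]
    have e2 : (x ^ N) ^ 2 = (y ^ N) ^ 2 := by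
      have := congrArg (· ^ 2) e1
      simpa only [mul_pow, hw2N, mul_one] using this
    have e3 : w x ^ N = w y ^ N := by
      rw [hN, mul_comm M, pow_mul, pow_mul, hs, hs, e2]
    rw [e3] at e1
    have e4 : x ^ N = y ^ N := mul_right_cancel₀ (pow_ne_zero _ (hw0 y)) e1
    have e5 : w x = w y := by rw [hw, hw, e4]
    rw [e5] at hxy
    exact mul_right_cancel₀ (hw0 y) hxy
end

section
/- Let p be an odd prime, t a positive integer, and let c ∈ F_p be an element that is not a 2t-th power in F_p (i.e., c ≠ x^{2t} for every x ∈ F_p; in particular c ≠ 0). Then the map x ↦ x·(x^{2t} - c)^{(p-1)/2} is a bijection of F_p. -/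
/-- **Key lemma.** Let `p` be an odd prime, `t ≥ 1`, and let `c ∈ F_p` be an element
that is not a `2t`-th power in `F_p` (i.e. `c ≠ x^{2t}` for every `x ∈ F_p`). Then the
map `x ↦ x·(x^{2t} - c)^{(p-1)/2}` is a bijection of `F_p`. -/
theorem stmt_13 (p : ℕ) (hp : p.Prime) (hodd : Odd p) (t : ℕ) (ht : 0 < t)
    (c : ZMod p) (hc : ∀ x : ZMod p, x ^ (2 * t) ≠ c) :
    Function.Bijective (fun x : ZMod p => x * (x ^ (2 * t) - c) ^ ((p - 1) / 2)) := by
  haveI : Fact p.Prime := ⟨hp⟩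
  have hhalf : (p - 1) / 2 = p / 2 := by
    obtain ⟨k, hk⟩ := hodd
    omega
  have hsign : ∀ x : ZMod p, (x ^ (2 * t) - c) ^ ((p - 1) / 2) = 1 ∨
      (x ^ (2 * t) - c) ^ ((p - 1) / 2) = -1 := by
    intro x
    rw [hhalf]
    exact ZMod.pow_div_two_eq_neg_one_or_one p (sub_ne_zero.mpr (hc x))
  have hsq : ∀ x : ZMod p, (x * (x ^ (2 * t) - c) ^ ((p - 1) / 2)) ^ 2 = x ^ 2 := by
    intro x
    rcases hsign x with h | h <;> rw [h] <;> ring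
  refine Finite.injective_iff_bijective.mp ?_
  intro x y hxy
  have hxy' : x * (x ^ (2 * t) - c) ^ ((p - 1) / 2) =
      y * (y ^ (2 * t) - c) ^ ((p - 1) / 2) := hxy
  have h2 : x ^ 2 = y ^ 2 := by rw [← hsq x, ← hsq y, hxy']
  have h3 : x ^ (2 * t) = y ^ (2 * t) := by rw [pow_mul, pow_mul, h2]
  rw [h3] at hxy'
  exact mul_right_cancel₀ (pow_ne_zero _ (sub_ne_zero.mpr (hc y))) hxy'
end

section
/- Let p be an odd prime, k and i positive integers, and let a ∈ F_{p^{2k}} satisfy a^{p^k - 1} = -1. Then a² lies in the subfield F_{p^k} of F_{p^{2k}}, and the map x ↦ x^{p^i} - a²·x is a bijection of F_{p^k}. -/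
/-- **Lemma.** Let `p` be an odd prime, `k, i ≥ 1`, and let `F` be the finite field with
`p^{2k}` elements. If `a ∈ F` satisfies `a^{p^k - 1} = -1`, then `a²` lies in the
subfield `F_{p^k} = {x : F | x^{p^k} = x}`, and the linearized map `x ↦ x^{p^i} - a²·x`
is a bijection of `F_{p^k}`. -/
theorem stmt_16 (p : ℕ) (hp : p.Prime) (hodd : Odd p) (k i : ℕ) (hk : 0 < k) (hi : 0 < i)
    (F : Type*) [Field F] [Fintype F] (hF : Fintype.card F = p ^ (2 * k))
    (a : F) (ha : a ^ (p ^ k - 1) = -1)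
    (S : Set F) (hS : S = {x : F | x ^ (p ^ k) = x}) :
    a ^ 2 ∈ S ∧ Set.BijOn (fun x : F => x ^ (p ^ i) - a ^ 2 * x) S S := by
  have := Fact.mk hp
  have hchar : CharP F p := by
    have : CharP F (ringChar F) := ringChar.charP F
    obtain ⟨n, hq, hn⟩ := FiniteField.card F (ringChar F)
    have h1 : ringChar F ∣ p ^ (2 * k) := by
      rw [← hF, hn]
      exact dvd_pow_self _ n.pos.ne'
    have h2 := (Nat.prime_dvd_prime_iff_eq hq hp).1 (hq.dvd_of_dvd_pow h1)
    rw [← h2]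
    infer_instance
  have h2 : (2 : F) ≠ 0 := by
    intro h
    have h3 : p ∣ 2 := (CharP.cast_eq_zero_iff F p 2).1 (by exact_mod_cast h)
    have h4 := (Nat.prime_dvd_prime_iff_eq hp Nat.prime_two).1 h3
    subst h4
    exact absurd hodd (by decide)
  have hpos : 0 < p ^ k := pow_pos hp.pos k
  have hak : a ^ (p ^ k) = -a := by
    rw [← Nat.sub_add_cancel hpos, pow_succ, ha]
    ring
  have hk1 : 0 < p ^ k - 1 := by
    have := Nat.one_lt_pow hk.ne' hp.one_lt
    omega
  have ha0 : a ≠ 0 := by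
    rintro rfl
    rw [zero_pow hk1.ne'] at ha
    have : (1 : F) = 0 := by linear_combination ha
    exact one_ne_zero this
  have haS : (a ^ 2) ^ (p ^ k) = a ^ 2 := by
    rw [← pow_mul, mul_comm, pow_mul, hak]
    ring
  have hmaps : Set.MapsTo (fun x : F => x ^ (p ^ i) - a ^ 2 * x) S S := by
    intro x hx
    rw [hS] at hx ⊢
    simp only [Set.mem_ofPred_eq] at hx ⊢
    rw [sub_pow_char_pow, mul_pow, haS, hx, ← pow_mul, mul_comm, pow_mul, hx]
  have hinj : Set.InjOn (fun x : F => x ^ (p ^ i) - a ^ 2 * x) S := by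
    intro x hx y hy hxy
    rw [hS] at hx hy
    simp only [Set.mem_ofPred_eq] at hx hy hxy
    by_contra hne
    have hz0 : x - y ≠ 0 := sub_ne_zero.2 hne
    have hz : (x - y) ^ (p ^ k) = x - y := by rw [sub_pow_char_pow, hx, hy]
    have hzi : (x - y) ^ (p ^ i) = a ^ 2 * (x - y) := by
      rw [sub_pow_char_pow]
      linear_combination hxy
    generalize x - y = z at hz0 hz hzi
    obtain ⟨m, hm⟩ := hodd.pow (n := i)
    rw [hm, pow_succ] at hzi
    have hsq : (z ^ m) ^ 2 = a ^ 2 := by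
      rw [← pow_mul, mul_comm m 2]
      exact mul_right_cancel₀ hz0 hzi
    have hzm : (z ^ m) ^ (p ^ k) = z ^ m := by
      rw [← pow_mul, mul_comm, pow_mul, hz]
    have key : a ^ (p ^ k) = a := by
      rcases sq_eq_sq_iff_eq_or_eq_neg.1 hsq with h | h
      · rwa [h] at hzm
      · rw [h, (hodd.pow).neg_pow] at hzm
        exact neg_injective hzm
    rw [hak] at key
    have : (2 : F) * a = 0 := by linear_combination -key
    exact (mul_ne_zero h2 ha0) this
  refine ⟨by rw [hS]; exact haS, hmaps, hinj, ?_⟩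
  have himg : (fun x : F => x ^ (p ^ i) - a ^ 2 * x) '' S = S :=
    Set.eq_of_subset_of_ncard_le hmaps.image_subset
      (Set.ncard_image_of_injOn hinj).ge (Set.toFinite S)
  exact himg.ge
end
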